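/- arXiv:2009.02530 — 8 statements merged into one kernel-verified Lean document; each statement's English description precedes it below -/
import Mathlib

section
/- Let ⟨·,·⟩ be nondegenerate and let B(V) = J₀ ⊕ J₁ be any ℤ₂-grading of the Jordan algebra B(V) (J₀, J₁ subspaces with B(V) = J₀ ⊕ J₁, J₀∘J₀ ⊆ J₀, J₀∘J₁ ⊆ J₁, J₁∘J₁ ⊆ J₀). Then J₁ ⊆ {0} × V, J₀ = K·(1,0) ⊕ (J₀ ∩ ({0} × V)), the subspaces W₀ = {u ∈ V : (0,u) ∈ J₀} and W₁ = {w ∈ V : (0,w) ∈ J₁} satisfy V = W₀ ⊕ W₁, and ⟨u,w⟩ = 0 for all u ∈ W₀, w ∈ W₁. In other words, every ℤ₂-grading of B(V) is given by a splitting of V into a direct sum of two orthogonal subspaces. -/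
/-- The Jordan product on `B(V) = K × V` associated to a symmetric bilinear form `b`. -/
def bmul {K V : Type*} [Field K] [AddCommGroup V] [Module K V]
    (b : V →ₗ[K] V →ₗ[K] K) (p q : K × V) : K × V :=
  (p.1 * q.1 + b p.2 q.2, p.1 • q.2 + q.1 • p.2)

/-!
Write the unit as `1 = e + f` with `e ∈ J₀` and `f ∈ J₁`. Comparing `e = e ∘ 1 = e ∘ e + e ∘ f`
with the grading gives `e ∘ f = 0`, hence `f = 1 ∘ f = f ∘ f ∈ J₀` and `f = 0`; so `1 ∈ J₀`.
Every `q = (α, u)` satisfies the quadratic equation `q ∘ q = 2α q + (⟨u, u⟩ - α²) 1`. If `q ∈ J₁`,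
this puts `2α q` into `J₀ ∩ J₁ = 0`, and its scalar part `2α² = 0` forces `α = 0`. Hence
`J₁ ⊆ {0} × V`, and orthogonality follows from `(0, u) ∘ (0, w) = (⟨u, w⟩, 0) ∈ J₁`.
-/

/-- A `ℤ₂`-grading `A = J₀ ⊕ J₁` of a nonassociative algebra `A` with bilinear product `mul`.
As is customary for commutative products, the mixed condition is imposed in one order of the
factors only: `J₀ ∘ J₁ ⊆ J₁`. -/
structure IsZModTwoGrading {R A : Type*} [CommRing R] [AddCommGroup A] [Module R A]
    (mul : A →ₗ[R] A →ₗ[R] A) (J₀ J₁ : Submodule R A) : Prop where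
  isCompl : IsCompl J₀ J₁
  mul_mem_zero_zero : ∀ p ∈ J₀, ∀ q ∈ J₀, mul p q ∈ J₀
  mul_mem_zero_one : ∀ p ∈ J₀, ∀ q ∈ J₁, mul p q ∈ J₁
  mul_mem_one_one : ∀ p ∈ J₁, ∀ q ∈ J₁, mul p q ∈ J₀

theorem IsZModTwoGrading.unit_mem {R A : Type*} [CommRing R] [AddCommGroup A] [Module R A]
    {mul : A →ₗ[R] A →ₗ[R] A} {J₀ J₁ : Submodule R A} (hJ : IsZModTwoGrading mul J₀ J₁) {u : A}
    (unit_mul : ∀ x, mul u x = x) (mul_unit : ∀ x, mul x u = x) : u ∈ J₀ := by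
  obtain ⟨e, f, he, hf, rfl⟩ := Submodule.codisjoint_iff_exists_add_eq.mp hJ.isCompl.codisjoint u
  have e_mul_f : mul e f = 0 := by
    refine Submodule.disjoint_def.mp hJ.isCompl.disjoint _ ?_ (hJ.mul_mem_zero_one e he f hf)
    have : mul e f = e - mul e e := by rw [eq_sub_iff_add_eq', ← map_add, mul_unit]
    exact this ▸ J₀.sub_mem he (hJ.mul_mem_zero_zero e he e he)
  have f_mul_f : mul f f = f := by
    simpa only [map_add, LinearMap.add_apply, e_mul_f, zero_add] using unit_mul f
  exact J₀.add_mem he (f_mul_f ▸ hJ.mul_mem_one_one f hf f hf)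

section JordanMul

variable {R M : Type*} [CommRing R] [AddCommGroup M] [Module R M]

/-- The product of `B(M) = R × M` for a bilinear form `b` on `M`: this is `bmul` over an arbitrary
commutative ring, bundled as a bilinear map. -/
def jordanMul (b : M →ₗ[R] M →ₗ[R] R) : R × M →ₗ[R] R × M →ₗ[R] R × M :=
  LinearMap.mk₂ R (fun p q ↦ (p.1 * q.1 + b p.2 q.2, p.1 • q.2 + q.1 • p.2))
    (fun p p' q ↦ by ext <;> simp [add_mul, add_smul, add_add_add_comm])
    (fun c p q ↦ by ext <;> simp [mul_add, mul_assoc, mul_smul, smul_comm q.1 c])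
    (fun p q q' ↦ by ext <;> simp [mul_add, add_smul, add_add_add_comm])
    (fun c p q ↦ by ext <;> simp [mul_add, mul_left_comm p.1 c, mul_smul, smul_comm p.1 c])

theorem jordanMul_apply (b : M →ₗ[R] M →ₗ[R] R) (p q : R × M) :
    jordanMul b p q = (p.1 * q.1 + b p.2 q.2, p.1 • q.2 + q.1 • p.2) :=
  rfl

theorem one_jordanMul (b : M →ₗ[R] M →ₗ[R] R) (p : R × M) : jordanMul b (1, 0) p = p := by
  simp [jordanMul_apply]

theorem jordanMul_one (b : M →ₗ[R] M →ₗ[R] R) (p : R × M) : jordanMul b p (1, 0) = p := by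
  simp [jordanMul_apply]

theorem jordanMul_self (b : M →ₗ[R] M →ₗ[R] R) (q : R × M) :
    jordanMul b q q = (2 * q.1) • q + (b q.2 q.2 - q.1 ^ 2) • (1, 0) := by
  ext
  · simp only [jordanMul_apply, Prod.fst_add, Prod.smul_fst, smul_eq_mul]
    ring
  · simp only [jordanMul_apply, Prod.snd_add, Prod.smul_snd]
    module

theorem jordanMul_inr_inr (b : M →ₗ[R] M →ₗ[R] R) (u w : M) :
    jordanMul b (LinearMap.inr R R M u) (LinearMap.inr R R M w) = (b u w, 0) := by
  simp [jordanMul_apply]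

theorem span_one_zero_sup_range_inr :
    Submodule.span R {((1 : R), (0 : M))} ⊔ LinearMap.range (LinearMap.inr R R M) = ⊤ := by
  have : LinearMap.inl R R M = LinearMap.toSpanSingleton R (R × M) (1, 0) := by ext <;> simp
  rw [← LinearMap.range_toSpanSingleton, ← this, LinearMap.sup_range_inl_inr]

theorem eq_span_one_zero_sup_inf_range_inr {J : Submodule R (R × M)} (hone : (1, 0) ∈ J) :
    J = Submodule.span R {((1 : R), (0 : M))} ⊔ (J ⊓ LinearMap.range (LinearMap.inr R R M)) := by
  rw [inf_comm J, ← sup_inf_assoc_of_le _ ((Submodule.span_singleton_le_iff_mem _ J).mpr hone),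
    span_one_zero_sup_range_inr, top_inf_eq]

theorem inr_snd_mem_of_one_zero_mem {J : Submodule R (R × M)} (hone : (1, 0) ∈ J)
    {p : R × M} (hp : p ∈ J) : LinearMap.inr R R M p.2 ∈ J := by
  have : LinearMap.inr R R M p.2 = p - p.1 • (1, 0) := by ext <;> simp
  exact this ▸ J.sub_mem hp (J.smul_mem p.1 hone)

namespace IsZModTwoGrading

variable {b : M →ₗ[R] M →ₗ[R] R} {J₀ J₁ : Submodule R (R × M)}

theorem one_zero_mem (hJ : IsZModTwoGrading (jordanMul b) J₀ J₁) : (1, 0) ∈ J₀ :=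
  hJ.unit_mem (one_jordanMul b) (jordanMul_one b)

variable [IsReduced R]

theorem fst_eq_zero_of_mem (hJ : IsZModTwoGrading (jordanMul b) J₀ J₁)
    (h2 : (2 : R) ∈ nonZeroDivisors R) {q : R × M} (hq : q ∈ J₁) : q.1 = 0 := by
  have hmem : (2 * q.1) • q ∈ J₀ := by
    rw [← J₀.add_mem_iff_left (J₀.smul_mem (b q.2 q.2 - q.1 ^ 2) hJ.one_zero_mem),
      ← jordanMul_self]
    exact hJ.mul_mem_one_one q hq q hq
  have hzero : (2 * q.1) • q = 0 :=
    Submodule.disjoint_def.mp hJ.isCompl.disjoint _ hmem (J₁.smul_mem _ hq)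
  have hsq : 2 * q.1 ^ 2 = 0 := by
    simpa only [Prod.smul_fst, Prod.fst_zero, smul_eq_mul, mul_assoc, ← sq] using
      congrArg Prod.fst hzero
  exact eq_zero_of_pow_eq_zero ((mul_left_mem_nonZeroDivisors_eq_zero_iff h2).mp hsq)

theorem le_range_inr (hJ : IsZModTwoGrading (jordanMul b) J₀ J₁)
    (h2 : (2 : R) ∈ nonZeroDivisors R) : J₁ ≤ LinearMap.range (LinearMap.inr R R M) :=
  fun q hq ↦ ⟨q.2, Prod.ext (hJ.fst_eq_zero_of_mem h2 hq).symm rfl⟩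

theorem isCompl_comap_inr (hJ : IsZModTwoGrading (jordanMul b) J₀ J₁)
    (h2 : (2 : R) ∈ nonZeroDivisors R) :
    IsCompl (J₀.comap (LinearMap.inr R R M)) (J₁.comap (LinearMap.inr R R M)) := by
  constructor
  · exact Submodule.disjoint_def.mpr fun v hv₀ hv₁ ↦
      congrArg Prod.snd (Submodule.disjoint_def.mp hJ.isCompl.disjoint _ hv₀ hv₁)
  · refine Submodule.codisjoint_iff_exists_add_eq.mpr fun v ↦ ?_
    obtain ⟨x, y, hx, hy, hxy⟩ :=
      Submodule.codisjoint_iff_exists_add_eq.mp hJ.isCompl.codisjoint (LinearMap.inr R R M v)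
    obtain ⟨w, rfl⟩ := hJ.le_range_inr h2 hy
    exact ⟨x.2, w, inr_snd_mem_of_one_zero_mem hJ.one_zero_mem hx, hy, congrArg Prod.snd hxy⟩

theorem form_eq_zero_of_inr_mem (hJ : IsZModTwoGrading (jordanMul b) J₀ J₁)
    (h2 : (2 : R) ∈ nonZeroDivisors R) {u w : M} (hu : LinearMap.inr R R M u ∈ J₀)
    (hw : LinearMap.inr R R M w ∈ J₁) : b u w = 0 := by
  simpa only [jordanMul_inr_inr] using hJ.fst_eq_zero_of_mem h2 (hJ.mul_mem_zero_one _ hu _ hw)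

end IsZModTwoGrading

theorem stmt3_general [IsReduced R] (h2 : (2 : R) ∈ nonZeroDivisors R)
    (b : M →ₗ[R] M →ₗ[R] R) (J₀ J₁ : Submodule R (R × M))
    (hJ : IsZModTwoGrading (jordanMul b) J₀ J₁) :
    J₁ ≤ LinearMap.range (LinearMap.inr R R M) ∧
    J₀ = Submodule.span R {((1 : R), (0 : M))} ⊔
      (J₀ ⊓ LinearMap.range (LinearMap.inr R R M)) ∧
    J₀.comap (LinearMap.inr R R M) ⊔ J₁.comap (LinearMap.inr R R M) = ⊤ ∧
    J₀.comap (LinearMap.inr R R M) ⊓ J₁.comap (LinearMap.inr R R M) = ⊥ ∧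
    (∀ u ∈ J₀.comap (LinearMap.inr R R M), ∀ w ∈ J₁.comap (LinearMap.inr R R M),
      b u w = 0) :=
  ⟨hJ.le_range_inr h2, eq_span_one_zero_sup_inf_range_inr hJ.one_zero_mem,
    (hJ.isCompl_comap_inr h2).sup_eq_top, (hJ.isCompl_comap_inr h2).inf_eq_bot,
    fun _ hu _ hw ↦ hJ.form_eq_zero_of_inr_mem h2 hu hw⟩

end JordanMul

/-- Every `ℤ₂`-grading of the Jordan algebra `B(V)` of a nondegenerate symmetric bilinear
form is given by a splitting of `V` into a direct sum of two orthogonal subspaces: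
`J₁ ⊆ {0} × V`, `J₀ = K(1,0) ⊕ (J₀ ∩ ({0} × V))`, and with `W₀ = {u : (0,u) ∈ J₀}`,
`W₁ = {w : (0,w) ∈ J₁}` one has `V = W₀ ⊕ W₁` and `⟨W₀, W₁⟩ = 0`. -/
theorem stmt3 {K V : Type*} [Field K] [AddCommGroup V] [Module K V]
    (h2 : (2 : K) ≠ 0)
    (b : V →ₗ[K] V →ₗ[K] K) (hsymm : ∀ u v : V, b u v = b v u)
    (hnd : ∀ v : V, (∀ u : V, b v u = 0) → v = 0)
    (J₀ J₁ : Submodule K (K × V))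
    (hsup : J₀ ⊔ J₁ = ⊤) (hinf : J₀ ⊓ J₁ = ⊥)
    (h00 : ∀ p ∈ J₀, ∀ q ∈ J₀, bmul b p q ∈ J₀)
    (h01 : ∀ p ∈ J₀, ∀ q ∈ J₁, bmul b p q ∈ J₁)
    (h11 : ∀ p ∈ J₁, ∀ q ∈ J₁, bmul b p q ∈ J₀) :
    J₁ ≤ LinearMap.range (LinearMap.inr K K V) ∧
    J₀ = Submodule.span K {((1 : K), (0 : V))} ⊔
      (J₀ ⊓ LinearMap.range (LinearMap.inr K K V)) ∧
    J₀.comap (LinearMap.inr K K V) ⊔ J₁.comap (LinearMap.inr K K V) = ⊤ ∧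
    J₀.comap (LinearMap.inr K K V) ⊓ J₁.comap (LinearMap.inr K K V) = ⊥ ∧
    (∀ u ∈ J₀.comap (LinearMap.inr K K V), ∀ w ∈ J₁.comap (LinearMap.inr K K V),
      b u w = 0) :=
  stmt3_general (mem_nonZeroDivisors_of_ne_zero h2) b J₀ J₁
    ⟨⟨disjoint_iff.mpr hinf, codisjoint_iff.mpr hsup⟩, h00, h01, h11⟩
end

section
/- Suppose dim V = 2, ⟨·,·⟩ is nondegenerate, and B(V) = J₀ ⊕ J₁ is a nontrivial ℤ₂-grading (J₀, J₁ subspaces with B(V) = J₀ ⊕ J₁, J₀∘J₀ ⊆ J₀, J₀∘J₁ ⊆ J₁, J₁∘J₁ ⊆ J₀, and J₁ ≠ 0). Then exactly one of the following holds: (1) J₀ = K·(1,0) and J₁ = {0} × V; or (2) there exist vectors w, w' ∈ V forming a basis of V with ⟨w,w'⟩ = 0 such that J₀ is spanned by (1,0) and (0,w), and J₁ is spanned by (0,w'). -/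
/-!
Every ℤ₂-grading of `B(V)` with `dim V > 1` comes from an orthogonal decomposition `V = V₀ ⊕ V₁`,
as `J₀ = K × V₀` and `J₁ = 0 × V₁`. Write the unit as `x + y` with `x` even and `y` odd: the odd
part of `x ∘ 1 = x` is `x ∘ y = 0`, so `y = 1 ∘ y = y ∘ y` is both odd and even, hence `0`. So the
unit is even, and `J₀` is stable under removing scalar parts. If some `(a, u) ∈ J₁` had `a ≠ 0`,
then multiplying it by `(0, w) ∈ J₀` would give an element of `J₀ ∩ J₁` with vector part `a w`, so
`J₀` would consist of scalars; every `v` would then be the vector part of some `(c, v) ∈ J₁`, whose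
product with `(a, u)` is a scalar, i.e. `c u + a v = 0`, so that `V = K u`. In dimension two only
the decompositions `0 ⊕ V` and line ⊕ line have `V₁ ≠ 0`.
-/

section LinearAlgebra

open Module Submodule

theorem prod_span_singleton_eq_span_pair {R M N : Type*} [Semiring R] [AddCommMonoid M]
    [AddCommMonoid N] [Module R M] [Module R N] (x : M) (y : N) :
    (span R {x}).prod (span R {y}) = span R {(x, 0), (0, y)} := by
  rw [← LinearMap.span_inl_union_inr, Set.image_singleton, Set.image_singleton,
    Set.singleton_union, LinearMap.inl_apply, LinearMap.inr_apply]

theorem prod_span_singleton_bot {R M N : Type*} [Semiring R] [AddCommMonoid M]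
    [AddCommMonoid N] [Module R M] [Module R N] (x : M) :
    (span R {x}).prod (⊥ : Submodule R N) = span R {(x, 0)} := by
  rw [← map_inl, map_span, Set.image_singleton, LinearMap.inl_apply]

theorem bot_prod_span_singleton {R M N : Type*} [Semiring R] [AddCommMonoid M]
    [AddCommMonoid N] [Module R M] [Module R N] (y : N) :
    (⊥ : Submodule R M).prod (span R {y}) = span R {(0, y)} := by
  rw [← map_inr, map_span, Set.image_singleton, LinearMap.inr_apply]

theorem eq_bot_or_span_singleton_of_isCompl {K V : Type*} [DivisionRing K] [AddCommGroup V]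
    [Module K V] (hdim : finrank K V = 2) {S T : Submodule K V} (hST : IsCompl S T)
    (hT : T ≠ ⊥) :
    (S = ⊥ ∧ T = ⊤) ∨
      ∃ w w' : V, LinearIndependent K ![w, w'] ∧ span K {w, w'} = ⊤ ∧
        S = span K {w} ∧ T = span K {w'} := by
  have : FiniteDimensional K V := .of_finrank_pos (by lia)
  rcases eq_or_ne S ⊥ with rfl | hS
  · exact .inl ⟨rfl, eq_top_of_bot_isCompl hST⟩
  have hadd : finrank K S + finrank K T = 2 := hdim ▸ finrank_add_eq_of_isCompl hST
  have hSpos : 1 ≤ finrank K S := one_le_finrank_iff.2 hS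
  have hTpos : 1 ≤ finrank K T := one_le_finrank_iff.2 hT
  obtain ⟨w, rfl⟩ := (finrank_le_one_iff_isPrincipal S).1 (by lia)
  obtain ⟨w', rfl⟩ := (finrank_le_one_iff_isPrincipal T).1 (by lia)
  have hspan : span K {w, w'} = ⊤ := by rw [span_insert, hST.sup_eq_top]
  have hli : LinearIndependent K ![w, w'] :=
    linearIndependent_of_top_le_span_of_card_eq_finrank
      (by rw [Matrix.range_cons_cons_empty, hspan]) (by rw [hdim, Fintype.card_fin])
  exact .inr ⟨w, w', hli, hspan, rfl, rfl⟩

end LinearAlgebra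

section Jordan

variable {K V : Type*} [Field K] [AddCommGroup V] [Module K V] {b : V →ₗ[K] V →ₗ[K] K}

theorem bmul_one (p : K × V) : bmul b p (1, 0) = p := by
  ext <;> simp [bmul]

theorem one_bmul (p : K × V) : bmul b (1, 0) p = p := by
  ext <;> simp [bmul]

theorem bmul_add (p q r : K × V) : bmul b p (q + r) = bmul b p q + bmul b p r := by
  ext
  · simp only [bmul, Prod.fst_add, Prod.snd_add, map_add]
    ring
  · simp only [bmul, Prod.fst_add, Prod.snd_add]
    module

theorem add_bmul (p q r : K × V) : bmul b (p + q) r = bmul b p r + bmul b q r := by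
  ext
  · simp only [bmul, Prod.fst_add, Prod.snd_add, map_add, LinearMap.add_apply]
    ring
  · simp only [bmul, Prod.fst_add, Prod.snd_add]
    module

/-- A `ℤ₂`-grading of the algebra `B(V) = K × V` with product `bmul b`: complementary subspaces
`J₀` (even part) and `J₁` (odd part) multiplying according to parity. As `B(V)` is commutative for
symmetric `b`, no condition is put on products `J₁ ∘ J₀`. -/
structure IsZTwoGrading (b : V →ₗ[K] V →ₗ[K] K) (J₀ J₁ : Submodule K (K × V)) : Prop where
  isCompl : IsCompl J₀ J₁
  even_bmul_even : ∀ p ∈ J₀, ∀ q ∈ J₀, bmul b p q ∈ J₀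
  even_bmul_odd : ∀ p ∈ J₀, ∀ q ∈ J₁, bmul b p q ∈ J₁
  odd_bmul_odd : ∀ p ∈ J₁, ∀ q ∈ J₁, bmul b p q ∈ J₀

namespace IsZTwoGrading

variable {J₀ J₁ : Submodule K (K × V)}

theorem eq_zero_of_mem (h : IsZTwoGrading b J₀ J₁) {p : K × V} (h₀ : p ∈ J₀) (h₁ : p ∈ J₁) :
    p = 0 :=
  Submodule.disjoint_def.1 h.isCompl.disjoint p h₀ h₁

theorem exists_even_add_odd (h : IsZTwoGrading b J₀ J₁) (p : K × V) :
    ∃ x y, x ∈ J₀ ∧ y ∈ J₁ ∧ x + y = p :=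
  Submodule.codisjoint_iff_exists_add_eq.1 h.isCompl.codisjoint p

theorem one_mem_even (h : IsZTwoGrading b J₀ J₁) : ((1, 0) : K × V) ∈ J₀ := by
  obtain ⟨x, y, hx, hy, hxy⟩ := h.exists_even_add_odd (1, 0)
  have hmul_one : bmul b x x + bmul b x y = x := by rw [← bmul_add, hxy, bmul_one]
  have hone_mul : bmul b x y + bmul b y y = y := by rw [← add_bmul, hxy, one_bmul]
  have hxy_zero : bmul b x y = 0 := by
    refine h.eq_zero_of_mem ?_ (h.even_bmul_odd x hx y hy)
    rw [eq_sub_of_add_eq' hmul_one]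
    exact J₀.sub_mem hx (h.even_bmul_even x hx x hx)
  have hyy : bmul b y y = y := by rwa [hxy_zero, zero_add] at hone_mul
  have hy_zero : y = 0 := h.eq_zero_of_mem (hyy ▸ h.odd_bmul_odd y hy y hy) hy
  rwa [← hxy, hy_zero, add_zero]

theorem mk_mem_even_iff (h : IsZTwoGrading b J₀ J₁) {a : K} {u : V} :
    (a, u) ∈ J₀ ↔ (0, u) ∈ J₀ := by
  have hscalar : (a, (0 : V)) ∈ J₀ := by simpa using J₀.smul_mem a h.one_mem_even
  rw [← J₀.add_mem_iff_right hscalar (y := (0, u)), Prod.mk_add_mk, add_zero, zero_add]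

theorem snd_eq_zero_of_mem_even (h : IsZTwoGrading b J₀ J₁) {a : K} {u : V} (hau : (a, u) ∈ J₁)
    (ha : a ≠ 0) {p : K × V} (hp : p ∈ J₀) : p.2 = 0 := by
  have hw : ((0 : K), p.2) ∈ J₀ := h.mk_mem_even_iff.1 hp
  have hmul : bmul b (0, p.2) (a, u) = (b p.2 u, a • p.2) := by simp [bmul]
  have hodd : (b p.2 u, a • p.2) ∈ J₁ := hmul ▸ h.even_bmul_odd _ hw _ hau
  have heven : (b p.2 u, a • p.2) ∈ J₀ :=
    h.mk_mem_even_iff.2 (by simpa using J₀.smul_mem a hw)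
  have hzero : a • p.2 = 0 := congrArg Prod.snd (h.eq_zero_of_mem heven hodd)
  exact (smul_eq_zero.1 hzero).resolve_left ha

theorem fst_eq_zero_of_mem_odd (h : IsZTwoGrading b J₀ J₁) (hV : 1 < Module.rank K V)
    {p : K × V} (hp : p ∈ J₁) : p.1 = 0 := by
  obtain ⟨a, u⟩ := p
  by_contra ha
  have hspan (v : V) : ∃ r : K, r • u = v := by
    obtain ⟨x, ⟨c, v'⟩, hx, hy, hxy⟩ := h.exists_even_add_odd (0, v)
    obtain rfl : v' = v := by
      simpa [h.snd_eq_zero_of_mem_even hp ha hx] using congrArg Prod.snd hxy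
    have hmul : c • u + a • v' = 0 :=
      h.snd_eq_zero_of_mem_even hp ha (h.odd_bmul_odd _ hy _ hp)
    refine ⟨-(a⁻¹ * c), ?_⟩
    rw [neg_smul, mul_smul, eq_neg_of_add_eq_zero_left hmul, smul_neg, neg_neg,
      inv_smul_smul₀ ha]
  exact hV.not_ge (rank_le_one_iff.2 ⟨u, hspan⟩)

theorem exists_isCompl_eq_prod (h : IsZTwoGrading b J₀ J₁) (hV : 1 < Module.rank K V) :
    ∃ V₀ V₁ : Submodule K V, IsCompl V₀ V₁ ∧ (∀ w ∈ V₀, ∀ w' ∈ V₁, b w w' = 0) ∧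
      J₀ = (⊤ : Submodule K K).prod V₀ ∧ J₁ = (⊥ : Submodule K K).prod V₁ := by
  have hodd {p : K × V} (hp : p ∈ J₁) : ((0 : K), p.2) ∈ J₁ := by
    rwa [← h.fst_eq_zero_of_mem_odd hV hp]
  refine ⟨J₀.comap (.inr K K V), J₁.comap (.inr K K V), ⟨?_, ?_⟩, fun w hw w' hw' ↦ ?_, ?_, ?_⟩
  · exact Submodule.disjoint_def.2 fun v hv₀ hv₁ ↦ congrArg Prod.snd (h.eq_zero_of_mem hv₀ hv₁)
  · refine Submodule.codisjoint_iff_exists_add_eq.2 fun v ↦ ?_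
    obtain ⟨x, y, hx, hy, hxy⟩ := h.exists_even_add_odd (0, v)
    exact ⟨x.2, y.2, h.mk_mem_even_iff.1 hx, hodd hy, congrArg Prod.snd hxy⟩
  · simpa [bmul] using h.fst_eq_zero_of_mem_odd hV (h.even_bmul_odd _ hw _ hw')
  · ext ⟨a, u⟩
    simpa using h.mk_mem_even_iff
  · ext ⟨a, u⟩
    refine ⟨fun hp ↦ ⟨h.fst_eq_zero_of_mem_odd hV hp, hodd hp⟩, ?_⟩
    rintro ⟨rfl : a = 0, hu⟩
    exact hu

end IsZTwoGrading

theorem stmt4_general (hdim : Module.finrank K V = 2) {J₀ J₁ : Submodule K (K × V)}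
    (h : IsZTwoGrading b J₀ J₁) (hnontriv : J₁ ≠ ⊥) :
    Xor
      (J₀ = Submodule.span K {((1 : K), (0 : V))} ∧
        J₁ = LinearMap.range (LinearMap.inr K K V))
      (∃ w w' : V, LinearIndependent K ![w, w'] ∧ Submodule.span K {w, w'} = ⊤ ∧
        b w w' = 0 ∧
        J₀ = Submodule.span K {((1 : K), (0 : V)), ((0 : K), w)} ∧
        J₁ = Submodule.span K {((0 : K), w')}) := by
  have htop : (⊤ : Submodule K K) = Submodule.span K {1} := Ideal.span_singleton_one.symm
  refine (xor_iff_or_and_not_and _ _).2 ⟨?_, ?_⟩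
  · have hV : 1 < Module.rank K V := Module.lt_rank_of_lt_finrank (by lia)
    obtain ⟨V₀, V₁, hcompl, horth, rfl, rfl⟩ := h.exists_isCompl_eq_prod hV
    have hV₁ : V₁ ≠ ⊥ := by
      rintro rfl
      exact hnontriv Submodule.prod_bot
    refine (eq_bot_or_span_singleton_of_isCompl hdim hcompl hV₁).imp ?_ ?_
    · rintro ⟨rfl, rfl⟩
      exact ⟨by rw [htop, prod_span_singleton_bot], by rw [← Submodule.map_inr, Submodule.map_top]⟩
    · rintro ⟨w, w', hli, hspan, rfl, rfl⟩
      exact ⟨w, w', hli, hspan,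
        horth w (Submodule.mem_span_singleton_self w) w' (Submodule.mem_span_singleton_self w'),
        by rw [htop, prod_span_singleton_eq_span_pair], bot_prod_span_singleton w'⟩
  · rintro ⟨⟨hJ₀, -⟩, w, w', hli, -, -, hJ₀', -⟩
    have hw : ((0 : K), w) ∈ Submodule.span K {((1 : K), (0 : V))} := by
      rw [← hJ₀, hJ₀']
      exact Submodule.subset_span (Set.mem_insert_of_mem _ rfl)
    rw [← prod_span_singleton_bot] at hw
    exact hli.ne_zero 0 hw.2

end Jordan

/-- If `dim V = 2`, the form is nondegenerate and `B(V) = J₀ ⊕ J₁` is a nontrivial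
`ℤ₂`-grading, then exactly one of the following holds: (1) `J₀ = K(1,0)` and
`J₁ = {0} × V`; or (2) there is a basis `w, w'` of `V` with `⟨w,w'⟩ = 0` such that
`J₀ = span{(1,0),(0,w)}` and `J₁ = span{(0,w')}`. -/
theorem stmt4 {K V : Type*} [Field K] [AddCommGroup V] [Module K V]
    [FiniteDimensional K V] (hdim : Module.finrank K V = 2)
    (h2 : (2 : K) ≠ 0)
    (b : V →ₗ[K] V →ₗ[K] K) (hsymm : ∀ u v : V, b u v = b v u)
    (hnd : ∀ v : V, (∀ u : V, b v u = 0) → v = 0)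
    (J₀ J₁ : Submodule K (K × V))
    (hsup : J₀ ⊔ J₁ = ⊤) (hinf : J₀ ⊓ J₁ = ⊥)
    (h00 : ∀ p ∈ J₀, ∀ q ∈ J₀, bmul b p q ∈ J₀)
    (h01 : ∀ p ∈ J₀, ∀ q ∈ J₁, bmul b p q ∈ J₁)
    (h11 : ∀ p ∈ J₁, ∀ q ∈ J₁, bmul b p q ∈ J₀)
    (hnontriv : J₁ ≠ ⊥) :
    Xor'
      (J₀ = Submodule.span K {((1 : K), (0 : V))} ∧
        J₁ = LinearMap.range (LinearMap.inr K K V))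
      (∃ w w' : V, LinearIndependent K ![w, w'] ∧ Submodule.span K {w, w'} = ⊤ ∧
        b w w' = 0 ∧
        J₀ = Submodule.span K {((1 : K), (0 : V)), ((0 : K), w)} ∧
        J₁ = Submodule.span K {((0 : K), w')}) := by
  exact stmt4_general hdim ⟨.of_eq hinf hsup, h00, h01, h11⟩ hnontriv
end

section
/- Suppose i ∈ K satisfies i² = −1, and set w₁ = [[i,1],[1,−i]] and w₂ = (1/2)·[[−i,1],[1,i]]. Then w₁ and w₂ are symmetric traceless matrices satisfying w₁∘w₁ = 0, w₂∘w₂ = 0 and w₁∘w₂ = I; moreover J₂ = K·I ⊕ K·w₁ ⊕ K·w₂, so this decomposition is a nontrivial ℤ₃-grading of J₂ with components (J₂)₀ = K·I, (J₂)₁ = K·w₁, (J₂)₂ = K·w₂. -/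
open Matrix

/-- The Jordan product `x ∘ y = (xy + yx)/2` on `2×2` matrices. -/
noncomputable def jmul {K : Type*} [Field K] (x y : Matrix (Fin 2) (Fin 2) K) :
    Matrix (Fin 2) (Fin 2) K :=
  (2 : K)⁻¹ • (x * y + y * x)

/-- The submodule of symmetric `2×2` matrices (the underlying space of `J₂`). -/
def symSub (K : Type*) [Field K] : Submodule K (Matrix (Fin 2) (Fin 2) K) where
  carrier := {x | xᵀ = x}
  add_mem' := by
    intro a b ha hb
    simp only [Set.mem_setOf_eq] at *
    rw [Matrix.transpose_add, ha, hb]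
  zero_mem' := by simp
  smul_mem' := by
    intro c a ha
    simp only [Set.mem_setOf_eq] at *
    rw [Matrix.transpose_smul, ha]

noncomputable def w1 (K : Type*) [Field K] (i : K) : Matrix (Fin 2) (Fin 2) K :=
  !![i, 1; 1, -i]

noncomputable def w2 (K : Type*) [Field K] (i : K) : Matrix (Fin 2) (Fin 2) K :=
  (2 : K)⁻¹ • !![-i, 1; 1, i]

/-- The components of the `ℤ₃`-grading: `A₀ = K·I`, `A₁ = K·w₁`, `A₂ = K·w₂`. -/
noncomputable def Agrade (K : Type*) [Field K] (i : K) :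
    ZMod 3 → Submodule K (Matrix (Fin 2) (Fin 2) K) := fun g =>
  if g = 0 then Submodule.span K {1}
  else if g = 1 then Submodule.span K {w1 K i}
  else Submodule.span K {w2 K i}

/-
On traceless `2×2` matrices the Jordan product is scalar valued: `x ∘ y = (tr (xy) / 2) I`, by the
polarized Cayley–Hamilton identity. For this bilinear form `s = [[0, 1], [1, 0]]` and
`d = [[1, 0], [0, -1]]` are orthonormal, so `w₁ = s + i d` and `w₂ = (s - i d) / 2` are isotropic
and pair to `1`. These relations alone make `I, w₁, w₂` multiply as elements of degrees `0, 1, 2`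
and force their linear independence; pairing a symmetric `x` with `I, w₂, w₁` gives its coordinates.
-/

theorem transpose_fin_two_of {α : Type*} (a b c d : α) : !![a, b; c, d]ᵀ = !![a, c; b, d] :=
  eta_fin_two _

theorem mul_add_mul_eq_trace_smul {R : Type*} [CommRing R] (x y : Matrix (Fin 2) (Fin 2) R) :
    x * y + y * x =
      x.trace • y + y.trace • x + ((x * y).trace - x.trace * y.trace) • 1 := by
  ext a b
  fin_cases a <;> fin_cases b <;> simp [trace_fin_two, mul_apply] <;> ring

section JordanProduct

variable {K : Type*} [Field K]

theorem jmul_comm (x y : Matrix (Fin 2) (Fin 2) K) : jmul x y = jmul y x := by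
  simp only [jmul, add_comm]

theorem add_jmul (x y z : Matrix (Fin 2) (Fin 2) K) :
    jmul (x + y) z = jmul x z + jmul y z := by
  simp only [jmul, add_mul, mul_add]
  module

theorem smul_jmul (a : K) (x y : Matrix (Fin 2) (Fin 2) K) :
    jmul (a • x) y = a • jmul x y := by
  simp only [jmul, smul_mul_assoc, mul_smul_comm]
  module

theorem jmul_smul (a : K) (x y : Matrix (Fin 2) (Fin 2) K) :
    jmul x (a • y) = a • jmul x y := by
  rw [jmul_comm, smul_jmul, jmul_comm]

theorem zero_jmul (x : Matrix (Fin 2) (Fin 2) K) : jmul 0 x = 0 := by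
  simp [jmul]

theorem one_jmul (h2 : (2 : K) ≠ 0) (x : Matrix (Fin 2) (Fin 2) K) : jmul 1 x = x := by
  rw [jmul, one_mul, mul_one, ← two_smul K x, inv_smul_smul₀ h2]

theorem jmul_one (h2 : (2 : K) ≠ 0) (x : Matrix (Fin 2) (Fin 2) K) : jmul x 1 = x := by
  rw [jmul_comm, one_jmul h2]

theorem jmul_eq_trace_smul_one {x y : Matrix (Fin 2) (Fin 2) K}
    (hx : x.trace = 0) (hy : y.trace = 0) :
    jmul x y = ((2 : K)⁻¹ * (x * y).trace) • 1 := by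
  rw [jmul, mul_add_mul_eq_trace_smul, hx, hy]
  module

theorem jmul_mem_span_singleton {x y u v w : Matrix (Fin 2) (Fin 2) K}
    (hx : x ∈ Submodule.span K {u}) (hy : y ∈ Submodule.span K {v})
    (huv : jmul u v ∈ Submodule.span K {w}) : jmul x y ∈ Submodule.span K {w} := by
  obtain ⟨a, rfl⟩ := Submodule.mem_span_singleton.mp hx
  obtain ⟨b, rfl⟩ := Submodule.mem_span_singleton.mp hy
  rw [smul_jmul, jmul_smul]
  exact Submodule.smul_mem _ a (Submodule.smul_mem _ b huv)

end JordanProduct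

/-- A hyperbolic pair for the Jordan product: `u` and `v` are isotropic and their product is the
identity matrix, as for a hyperbolic pair of a quadratic form with values in `K · I`. -/
structure IsHyperbolicPair {K : Type*} [Field K] (u v : Matrix (Fin 2) (Fin 2) K) : Prop where
  jmul_self_left : jmul u u = 0
  jmul_self_right : jmul v v = 0
  jmul_eq_one : jmul u v = 1

namespace IsHyperbolicPair

variable {K : Type*} [Field K] {u v : Matrix (Fin 2) (Fin 2) K}

theorem symm (huv : IsHyperbolicPair u v) : IsHyperbolicPair v u :=
  ⟨huv.jmul_self_right, huv.jmul_self_left, by rw [jmul_comm, huv.jmul_eq_one]⟩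

theorem coeff_right_eq_zero (huv : IsHyperbolicPair u v) (h2 : (2 : K) ≠ 0) {a b c : K}
    (h : a • 1 + b • u + c • v = 0) : c = 0 := by
  have mul_u : a • u + c • 1 = 0 := by
    simpa [add_jmul, smul_jmul, zero_jmul, one_jmul h2, huv.jmul_self_left,
      huv.symm.jmul_eq_one] using congrArg (jmul · u) h
  have mul_u_u : c • u = 0 := by
    simpa [add_jmul, smul_jmul, zero_jmul, one_jmul h2, huv.jmul_self_left]
      using congrArg (jmul · u) mul_u
  simpa [smul_jmul, zero_jmul, huv.jmul_eq_one] using congrArg (jmul · v) mul_u_u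

theorem linearIndependent (huv : IsHyperbolicPair u v) (h2 : (2 : K) ≠ 0) :
    LinearIndependent K ![1, u, v] := by
  rw [Fintype.linearIndependent_iff]
  intro coeff hsum
  have h : coeff 0 • 1 + coeff 1 • u + coeff 2 • v = 0 := by
    simpa [Fin.sum_univ_three] using hsum
  have hc : coeff 2 = 0 := huv.coeff_right_eq_zero h2 h
  have hb : coeff 1 = 0 := huv.symm.coeff_right_eq_zero h2 (by rwa [add_right_comm])
  have ha : coeff 0 = 0 := by simpa [hb, hc] using h
  simp [Fin.forall_fin_succ, ha, hb, hc]

-- `ZMod 3` unfolds to `Fin 3`, so a degree indexes the triple of generators directly.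
theorem jmul_mem_span_add (huv : IsHyperbolicPair u v) (h2 : (2 : K) ≠ 0) (g h : ZMod 3) :
    jmul (![1, u, v] g) (![1, u, v] h) ∈ Submodule.span K {![1, u, v] (g + h)} := by
  have mem_span := fun x : Matrix (Fin 2) (Fin 2) K => Submodule.mem_span_singleton_self (R := K) x
  fin_cases g <;> fin_cases h
  · exact (one_jmul h2 1).symm ▸ mem_span 1
  · exact (one_jmul h2 u).symm ▸ mem_span u
  · exact (one_jmul h2 v).symm ▸ mem_span v
  · exact (jmul_one h2 u).symm ▸ mem_span u
  · exact huv.jmul_self_left.symm ▸ Submodule.zero_mem _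
  · exact huv.jmul_eq_one.symm ▸ mem_span 1
  · exact (jmul_one h2 v).symm ▸ mem_span v
  · exact huv.symm.jmul_eq_one.symm ▸ mem_span 1
  · exact huv.jmul_self_right.symm ▸ Submodule.zero_mem _

end IsHyperbolicPair

section Generators

variable {K : Type*} [Field K] (i : K)

theorem transpose_w1 : (w1 K i)ᵀ = w1 K i := by
  rw [w1, transpose_fin_two_of]

theorem transpose_w2 : (w2 K i)ᵀ = w2 K i := by
  rw [w2, transpose_smul, transpose_fin_two_of]

theorem trace_w1 : (w1 K i).trace = 0 := by
  simp [w1, trace_fin_two]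

theorem trace_w2 : (w2 K i).trace = 0 := by
  simp [w2, trace_fin_two]

theorem w1_notMem_span_one : w1 K i ∉ Submodule.span K {1} := by
  intro h
  obtain ⟨a, ha⟩ := Submodule.mem_span_singleton.mp h
  simpa [w1] using congrFun₂ ha 0 1

theorem Agrade_eq_span (g : ZMod 3) :
    Agrade K i g = Submodule.span K {![1, w1 K i, w2 K i] g} := by
  fin_cases g <;> rfl

variable {i}

theorem isHyperbolicPair_w1_w2 (h2 : (2 : K) ≠ 0) (hi : i ^ 2 = -1) :
    IsHyperbolicPair (w1 K i) (w2 K i) where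
  jmul_self_left := by
    have isotropic : (w1 K i * w1 K i).trace = 0 := by
      rw [w1, mul_fin_two, trace_fin_two_of]
      linear_combination 2 * hi
    rw [jmul_eq_trace_smul_one (trace_w1 i) (trace_w1 i), isotropic, mul_zero, zero_smul]
  jmul_self_right := by
    have isotropic : (w2 K i * w2 K i).trace = 0 := by
      rw [w2, smul_mul_smul_comm, mul_fin_two, trace_smul, trace_fin_two_of, smul_eq_mul]
      linear_combination 2⁻¹ * 2⁻¹ * 2 * hi
    rw [jmul_eq_trace_smul_one (trace_w2 i) (trace_w2 i), isotropic, mul_zero, zero_smul]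
  jmul_eq_one := by
    have pairing : (w1 K i * w2 K i).trace = 2 := by
      rw [w1, w2, mul_smul_comm, mul_fin_two, trace_smul, trace_fin_two_of, smul_eq_mul]
      linear_combination -(2⁻¹ * 2) * hi + 2 * inv_mul_cancel₀ h2
    rw [jmul_eq_trace_smul_one (trace_w1 i) (trace_w2 i), pairing, inv_mul_cancel₀ h2, one_smul]

theorem sum_trace_smul_eq_of_transpose_eq (h2 : (2 : K) ≠ 0) (hi : i ^ 2 = -1)
    {x : Matrix (Fin 2) (Fin 2) K} (hx : xᵀ = x) :
    ((2 : K)⁻¹ * x.trace) • 1 + ((2 : K)⁻¹ * (x * w2 K i).trace) • w1 K i +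
      ((2 : K)⁻¹ * (x * w1 K i).trace) • w2 K i = x := by
  have hx₁₀ : x 1 0 = x 0 1 := congrFun₂ hx 0 1
  have pairing_w1 : (x * w1 K i).trace = i * (x 0 0 - x 1 1) + 2 * x 0 1 := by
    rw [w1, eta_fin_two x, hx₁₀, mul_fin_two, trace_fin_two_of]
    simp only [of_apply, cons_val_zero, cons_val_one]
    ring
  have pairing_w2 : (x * w2 K i).trace = x 0 1 - 2⁻¹ * (i * (x 0 0 - x 1 1)) := by
    rw [w2, mul_smul_comm, trace_smul, eta_fin_two x, hx₁₀, mul_fin_two, trace_fin_two_of]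
    simp only [of_apply, cons_val_zero, cons_val_one, smul_eq_mul]
    linear_combination x 0 1 * inv_mul_cancel₀ h2
  rw [pairing_w1, pairing_w2, trace_fin_two]
  ext a b
  fin_cases a <;> fin_cases b <;> simp [w1, w2] <;> grind

theorem mem_span_of_transpose_eq (h2 : (2 : K) ≠ 0) (hi : i ^ 2 = -1)
    {x : Matrix (Fin 2) (Fin 2) K} (hx : xᵀ = x) :
    x ∈ Submodule.span K {1, w1 K i, w2 K i} :=
  Submodule.mem_span_triple.mpr ⟨_, _, _, sum_trace_smul_eq_of_transpose_eq h2 hi hx⟩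

theorem jmul_mem_Agrade_add (h2 : (2 : K) ≠ 0) (hi : i ^ 2 = -1) {g h : ZMod 3}
    {x y : Matrix (Fin 2) (Fin 2) K} (hx : x ∈ Agrade K i g) (hy : y ∈ Agrade K i h) :
    jmul x y ∈ Agrade K i (g + h) := by
  rw [Agrade_eq_span] at hx hy ⊢
  exact jmul_mem_span_singleton hx hy ((isHyperbolicPair_w1_w2 h2 hi).jmul_mem_span_add h2 g h)

variable (i)

theorem Agrade_zero_ne_symSub : Agrade K i 0 ≠ symSub K := by
  intro h
  have w1_mem : w1 K i ∈ Agrade K i 0 := h ▸ transpose_w1 i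
  exact w1_notMem_span_one i w1_mem

end Generators

/-- If `i² = -1`, then `w₁, w₂` are symmetric traceless, `w₁∘w₁ = w₂∘w₂ = 0`,
`w₁∘w₂ = I`, and `J₂ = K·I ⊕ K·w₁ ⊕ K·w₂` is a nontrivial `ℤ₃`-grading of `J₂`. -/
theorem stmt5 {K : Type*} [Field K] (h2 : (2 : K) ≠ 0) (i : K) (hi : i ^ 2 = -1) :
    (w1 K i)ᵀ = w1 K i ∧ (w2 K i)ᵀ = w2 K i ∧
    Matrix.trace (w1 K i) = 0 ∧ Matrix.trace (w2 K i) = 0 ∧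
    jmul (w1 K i) (w1 K i) = 0 ∧ jmul (w2 K i) (w2 K i) = 0 ∧
    jmul (w1 K i) (w2 K i) = 1 ∧
    LinearIndependent K ![(1 : Matrix (Fin 2) (Fin 2) K), w1 K i, w2 K i] ∧
    (∀ x : Matrix (Fin 2) (Fin 2) K, xᵀ = x →
      x ∈ Submodule.span K {(1 : Matrix (Fin 2) (Fin 2) K), w1 K i, w2 K i}) ∧
    (∀ g h : ZMod 3, ∀ x ∈ Agrade K i g, ∀ y ∈ Agrade K i h,
      jmul x y ∈ Agrade K i (g + h)) ∧
    Agrade K i 0 ≠ symSub K := by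
  have pair : IsHyperbolicPair (w1 K i) (w2 K i) := isHyperbolicPair_w1_w2 h2 hi
  exact ⟨transpose_w1 i, transpose_w2 i, trace_w1 i, trace_w2 i,
    pair.jmul_self_left, pair.jmul_self_right, pair.jmul_eq_one,
    pair.linearIndependent h2,
    fun _ hx => mem_span_of_transpose_eq h2 hi hx,
    fun _ _ _ hx _ hy => jmul_mem_Agrade_add h2 hi hx hy,
    Agrade_zero_ne_symSub i⟩
end

section
/- The Jordan algebra J₂ admits a nontrivial ℤ₃-grading — i.e., subspaces A₀, A₁, A₂ with J₂ = A₀ ⊕ A₁ ⊕ A₂, A_g∘A_h ⊆ A_{g+h (mod 3)} for all g,h, and A₀ ≠ J₂ — if and only if −1 is a square in K. -/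
open Matrix

/-!
If `1 = ∑ eₕ` with `eₕ` homogeneous, then for `h ≠ 0` the component of `x = 1 ∘ x` of degree
`h + deg x` is `eₕ ∘ x = 0`; hence `eₕ = eₕ ∘ 1 = 0`, and `1` has degree `0`. Let `x ≠ 0` be
homogeneous of degree `g ≠ 0`. By Cayley–Hamilton `x² ∈ span {1, x}`, which has degrees `0` and `g`
only, while `x²` has degree `2g ∉ {0, g}`; so `x² = 0`, and a nonzero symmetric matrix with square
zero gives a square root of `-1`. Conversely, if `i² = -1`, the symmetric matrices
`u = !![1, i; i, -1]` and `v = !![1, -i; -i, -1]` satisfy `u² = v² = 0` and `u ∘ v = 2`, so `1`, `u`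
and `v` may be given the degrees `0`, `g` and `-g`.
-/

section Grading

variable {G R M : Type*} [CommRing R] [AddCommGroup M] [Module R M]

/-- A grading by `G` of the subspace `S` of a module `M`, with respect to a bilinear product `B` on
`M` that need be neither associative nor unital. The components are encoded as subspaces of `M`
whose sum is `S`, which makes `S` closed under `B`. -/
structure IsGrading [Add G] (B : M →ₗ[R] M →ₗ[R] M) (S : Submodule R M)
    (A : G → Submodule R M) : Prop where
  iSupIndep : iSupIndep A
  iSup_eq : ⨆ g, A g = S
  apply_mem : ∀ g h, ∀ x ∈ A g, ∀ y ∈ A h, B x y ∈ A (g + h)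

namespace IsGrading

variable {B : M →ₗ[R] M →ₗ[R] M} {S : Submodule R M} {A : G → Submodule R M}

section Add

variable [Add G]

theorem le (hA : IsGrading B S A) (g : G) : A g ≤ S :=
  (le_iSup A g).trans_eq hA.iSup_eq

theorem iff_inf_eq_bot : IsGrading B S A ↔
    (∀ g, A g ≤ S) ∧ (⨆ g, A g) = S ∧ (∀ g, A g ⊓ (⨆ h, ⨆ _ : h ≠ g, A h) = ⊥) ∧
      ∀ g h, ∀ x ∈ A g, ∀ y ∈ A h, B x y ∈ A (g + h) :=
  ⟨fun hA => ⟨hA.le, hA.iSup_eq, fun g => (hA.iSupIndep g).eq_bot, hA.apply_mem⟩,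
    fun ⟨_, hS, hind, hmul⟩ => ⟨fun g => disjoint_iff.2 (hind g), hS, hmul⟩⟩

theorem exists_ne_zero_of_ne (hA : IsGrading B S A) {g₀ : G} (hne : A g₀ ≠ S) :
    ∃ g ≠ g₀, ∃ x ∈ A g, x ≠ 0 := by
  contrapose! hne
  have hbot : ⨆ (g) (_ : g ≠ g₀), A g = ⊥ :=
    iSup₂_eq_bot.2 fun g hg => (Submodule.eq_bot_iff _).2 (hne g hg)
  rw [← hA.iSup_eq, iSup_split_single A g₀, hbot, sup_bot_eq]

theorem ne_of_mem_of_ne_zero (hA : IsGrading B S A) {g h : G} (hgh : g ≠ h) {x : M} (hx : x ∈ A g)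
    (hx0 : x ≠ 0) : A h ≠ S := fun hS =>
  hx0 (Submodule.disjoint_def.1 (hA.iSupIndep.pairwiseDisjoint hgh) x hx (hS ▸ hA.le g hx))

theorem of_linearIndependent {ι : Type*} {b : ι → M} (hb : LinearIndependent R b) (deg : ι → G)
    (hmul : ∀ i j, B (b i) (b j) ∈ Submodule.span R (b '' (deg ⁻¹' {deg i + deg j}))) :
    IsGrading B (Submodule.span R (Set.range b))
      fun g => Submodule.span R (b '' (deg ⁻¹' {g})) where
  iSupIndep g := by
    have hle : ⨆ (h) (_ : h ≠ g), Submodule.span R (b '' (deg ⁻¹' {h})) ≤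
        Submodule.span R (b '' (deg ⁻¹' {g}ᶜ)) :=
      iSup₂_le fun h hh => Submodule.span_mono <| Set.image_mono <| Set.preimage_mono <|
        Set.singleton_subset_iff.2 hh
    exact (hb.disjoint_span_image (disjoint_compl_right.preimage deg)).mono_right hle
  iSup_eq := by
    rw [← Submodule.span_iUnion, ← Set.image_iUnion, ← Set.preimage_iUnion,
      Set.iUnion_of_singleton, Set.preimage_univ, Set.image_univ]
  apply_mem g h x hx y hy := by
    refine LinearMap.BilinMap.apply_apply_mem_of_mem_span _ _ _ B ?_ x y hx hy
    rintro _ ⟨i, rfl, rfl⟩ _ ⟨j, rfl, rfl⟩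
    exact hmul i j

end Add

variable [AddMonoid G] [IsRightCancelAdd G]

theorem identity_mem (hA : IsGrading B S A) {e : M} (he : e ∈ S) (hleft : ∀ x ∈ S, B e x = x)
    (hright : ∀ x ∈ S, B x e = x) : e ∈ A 0 := by
  have hdecomp : e ∈ A 0 ⊔ ⨆ (h) (_ : h ≠ 0), A h := by
    rwa [← iSup_split_single, hA.iSup_eq]
  obtain ⟨e₀, he₀, f, hf, rfl⟩ := Submodule.mem_sup.1 hdecomp
  have hfS : f ∈ S := by simpa using S.sub_mem he (hA.le 0 he₀)
  have hf_apply : ∀ g, ∀ x ∈ A g, B f x = 0 := by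
    intro g x hx
    have hmem : B f x ∈ A g := by
      have hsub : B f x = x - B e₀ x := by
        rw [eq_sub_iff_add_eq', ← LinearMap.add_apply, ← map_add, hleft x (hA.le g hx)]
      rw [hsub]
      exact sub_mem hx (by simpa only [zero_add] using hA.apply_mem 0 g e₀ he₀ x hx)
    have hmem_others : B f x ∈ ⨆ (k) (_ : k ≠ g), A k := by
      have hle : ⨆ (h) (_ : h ≠ 0), A h ≤ (⨆ (k) (_ : k ≠ g), A k).comap (B.flip x) :=
        iSup₂_le fun h hh y hy => Submodule.mem_iSup_of_mem (h + g) <|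
          Submodule.mem_iSup_of_mem (mt add_eq_right.1 hh) (hA.apply_mem h g y hy x hx)
      exact hle hf
    exact Submodule.disjoint_def.1 (hA.iSupIndep g) _ hmem hmem_others
  have hS_le : S ≤ LinearMap.ker (B f) := hA.iSup_eq ▸ iSup_le hf_apply
  have hf0 : f = 0 := (hright f hfS).symm.trans (hS_le he)
  rwa [hf0, add_zero]

theorem apply_self_eq_zero (hA : IsGrading B S A) {e x : M} {g : G} (he : e ∈ A 0) (hx : x ∈ A g)
    (hg : g + g ≠ 0) (hquad : B x x ∈ Submodule.span R {e, x}) : B x x = 0 := by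
  have hg0 : g ≠ g + g := fun h => hg (by rw [← h, add_eq_right.1 h.symm])
  have hle : Submodule.span R {e, x} ≤ ⨆ (h) (_ : h ≠ g + g), A h :=
    Submodule.span_le.2 <| Set.pair_subset
      (Submodule.mem_iSup_of_mem 0 (Submodule.mem_iSup_of_mem hg.symm he))
      (Submodule.mem_iSup_of_mem g (Submodule.mem_iSup_of_mem hg0 hx))
  exact Submodule.disjoint_def.1 (hA.iSupIndep (g + g)) _ (hA.apply_mem g g x hx x hx) (hle hquad)

end IsGrading

end Grading

section SquareZero

theorem mul_self_eq_trace_smul_sub_det_smul_one {R : Type*} [CommRing R]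
    (x : Matrix (Fin 2) (Fin 2) R) : x * x = x.trace • x - x.det • 1 := by
  have hadj : x.adjugate = x.trace • 1 - x := by
    ext i j
    fin_cases i <;> fin_cases j <;> simp [adjugate_fin_two, trace_fin_two]
  rw [← mul_adjugate, hadj, mul_sub, mul_smul_comm, mul_one, sub_sub_cancel]

theorem mul_self_mem_span_one_self {R : Type*} [CommRing R] (x : Matrix (Fin 2) (Fin 2) R) :
    x * x ∈ Submodule.span R {1, x} :=
  Submodule.mem_span_pair.2 ⟨-x.det, x.trace, by
    rw [mul_self_eq_trace_smul_sub_det_smul_one, neg_smul, neg_add_eq_sub]⟩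

theorem isSquare_neg_one_of_sq_add_sq_eq_zero {F : Type*} [Field F] {a b : F}
    (h : a ^ 2 + b ^ 2 = 0) (hb : b ≠ 0) : IsSquare (-1 : F) := by
  refine ⟨a / b, ?_⟩
  field_simp
  linear_combination -h

theorem isSquare_neg_one_of_isSymm_of_mul_self_eq_zero {F : Type*} [Field F]
    {x : Matrix (Fin 2) (Fin 2) F} (hsymm : x.IsSymm) (hsq : x * x = 0) (hx : x ≠ 0) :
    IsSquare (-1 : F) := by
  have h10 : x 1 0 = x 0 1 := hsymm.apply 0 1
  have hrow (i : Fin 2) : x i 0 ^ 2 + x i 1 ^ 2 = 0 := by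
    have hii := congrFun₂ hsq i i
    rw [mul_apply, Fin.sum_univ_two, hsymm.apply i 0, hsymm.apply i 1] at hii
    simpa only [sq, Matrix.zero_apply] using hii
  by_cases h01 : x 0 1 = 0
  · refine absurd ?_ hx
    have h00 : x 0 0 = 0 := by simpa [h01] using hrow 0
    have h11 : x 1 1 = 0 := by simpa [h10, h01] using hrow 1
    ext i j
    fin_cases i <;> fin_cases j <;> simp [h00, h01, h10, h11]
  · exact isSquare_neg_one_of_sq_add_sq_eq_zero (hrow 0) h01

end SquareZero

section Jordan

variable {K : Type*} [Field K]

/-- The Jordan product `jmul` as a bilinear map, the form in which `IsGrading` takes a product. -/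
noncomputable def jmulBilin (K : Type*) [Field K] :
    Matrix (Fin 2) (Fin 2) K →ₗ[K] Matrix (Fin 2) (Fin 2) K →ₗ[K] Matrix (Fin 2) (Fin 2) K :=
  (2 : K)⁻¹ • (LinearMap.mul K _ + (LinearMap.mul K _).flip)

theorem jmulBilin_apply (x y : Matrix (Fin 2) (Fin 2) K) : jmulBilin K x y = jmul x y := rfl

theorem jmul_eq_mul_of_commute (h2 : (2 : K) ≠ 0) {x y : Matrix (Fin 2) (Fin 2) K}
    (hxy : Commute x y) : jmul x y = x * y := by
  rw [jmul, ← hxy.eq, ← two_smul K, inv_smul_smul₀ h2]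

theorem jmul_self (h2 : (2 : K) ≠ 0) (x : Matrix (Fin 2) (Fin 2) K) : jmul x x = x * x :=
  jmul_eq_mul_of_commute h2 (Commute.refl x)

theorem mem_symSub {x : Matrix (Fin 2) (Fin 2) K} : x ∈ symSub K ↔ x.IsSymm := Iff.rfl

theorem IsGrading.isSquare_neg_one {G : Type*} [AddMonoid G] [IsRightCancelAdd G]
    (h2 : (2 : K) ≠ 0) {A : G → Submodule K (Matrix (Fin 2) (Fin 2) K)}
    (hA : IsGrading (jmulBilin K) (symSub K) A) {g : G} (hg : g + g ≠ 0)
    {x : Matrix (Fin 2) (Fin 2) K} (hx : x ∈ A g) (hx0 : x ≠ 0) : IsSquare (-1 : K) := by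
  have hone : 1 ∈ A 0 := hA.identity_mem (mem_symSub.2 isSymm_one)
    (fun y _ => one_jmul h2 y) (fun y _ => jmul_one h2 y)
  have hself : jmulBilin K x x = x * x := jmul_self h2 x
  have hsq : jmulBilin K x x = 0 :=
    hA.apply_self_eq_zero hone hx hg (hself ▸ mul_self_mem_span_one_self x)
  exact isSquare_neg_one_of_isSymm_of_mul_self_eq_zero (mem_symSub.1 (hA.le g hx))
    (hself.symm.trans hsq) hx0

end Jordan

section IsotropicBasis

variable {K : Type*} [Field K]

/-- The family `1, u, v` of symmetric matrices in which, when `i² = -1`, both `u` and `v` have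
square zero: a basis of `J₂` whose members serve as the homogeneous elements of a grading. -/
def isotropicBasis (i : K) : Fin 3 → Matrix (Fin 2) (Fin 2) K :=
  ![1, !![1, i; i, -1], !![1, -i; -i, -1]]

theorem isotropicBasis_zero (i : K) : isotropicBasis i 0 = 1 := rfl

theorem linearIndependent_isotropicBasis (h2 : (2 : K) ≠ 0) {i : K} (hi : i ≠ 0) :
    LinearIndependent K (isotropicBasis i) := by
  refine Fintype.linearIndependent_iff.2 fun c hc => ?_
  have h00 : c 0 + c 1 + c 2 = 0 := by
    simpa [Fin.sum_univ_three, isotropicBasis] using congrFun₂ hc 0 0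
  have h01 : c 1 * i - c 2 * i = 0 := by
    simpa [Fin.sum_univ_three, isotropicBasis, ← sub_eq_add_neg] using congrFun₂ hc 0 1
  have h11 : c 0 - c 1 - c 2 = 0 := by
    simpa [Fin.sum_univ_three, isotropicBasis, ← sub_eq_add_neg] using congrFun₂ hc 1 1
  have hc0 : c 0 = 0 := mul_left_cancel₀ h2 (by linear_combination h00 + h11)
  have hc12 : c 1 = c 2 := mul_right_cancel₀ hi (sub_eq_zero.1 h01)
  have hc2 : c 2 = 0 := mul_left_cancel₀ h2 (by linear_combination h00 - hc0 - hc12)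
  intro k
  fin_cases k
  exacts [hc0, hc12.trans hc2, hc2]

theorem span_isotropicBasis (h2 : (2 : K) ≠ 0) {i : K} (hi : i ≠ 0) :
    Submodule.span K (Set.range (isotropicBasis i)) = symSub K := by
  refine le_antisymm (Submodule.span_le.2 ?_) fun x hx => ?_
  · rintro _ ⟨k, rfl⟩
    refine mem_symSub.2 (IsSymm.ext fun a b => ?_)
    fin_cases k <;> fin_cases a <;> fin_cases b <;> simp [isotropicBasis]
  · have h10 : x 1 0 = x 0 1 := (mem_symSub.1 hx).apply 0 1
    refine (Submodule.mem_span_range_iff_exists_fun K).2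
      ⟨![(x 0 0 + x 1 1) / 2, ((x 0 0 - x 1 1) / 2 + x 0 1 / i) / 2,
        ((x 0 0 - x 1 1) / 2 - x 0 1 / i) / 2], ?_⟩
    ext a b
    fin_cases a <;> fin_cases b <;> simp [Fin.sum_univ_three, isotropicBasis, h10] <;>
      field_simp <;> ring

theorem jmul_isotropicBasis_one_one (h2 : (2 : K) ≠ 0) {i : K} (hi : i * i = -1) :
    jmul (isotropicBasis i 1) (isotropicBasis i 1) = 0 := by
  rw [jmul_self h2]
  ext a b
  fin_cases a <;> fin_cases b <;> simp [isotropicBasis, hi]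

theorem jmul_isotropicBasis_two_two (h2 : (2 : K) ≠ 0) {i : K} (hi : i * i = -1) :
    jmul (isotropicBasis i 2) (isotropicBasis i 2) = 0 := by
  rw [jmul_self h2]
  ext a b
  fin_cases a <;> fin_cases b <;> simp [isotropicBasis, hi]

theorem jmul_isotropicBasis_one_two (h2 : (2 : K) ≠ 0) {i : K} (hi : i * i = -1) :
    jmul (isotropicBasis i 1) (isotropicBasis i 2) = (2 : K) • 1 := by
  rw [jmul, inv_smul_eq_iff₀ h2]
  ext a b
  fin_cases a <;> fin_cases b <;> simp [isotropicBasis, hi] <;> ring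

theorem isGrading_isotropicBasis {G : Type*} [AddGroup G] (h2 : (2 : K) ≠ 0) {i : K}
    (hi : i * i = -1) (g : G) :
    IsGrading (jmulBilin K) (symSub K) fun h =>
      Submodule.span K (isotropicBasis i '' (![0, g, -g] ⁻¹' {h})) := by
  have hi0 : i ≠ 0 := by
    rintro rfl
    simp at hi
  rw [← span_isotropicBasis h2 hi0]
  refine .of_linearIndependent (linearIndependent_isotropicBasis h2 hi0) _ fun k l => ?_
  have hmem (k : Fin 3) : isotropicBasis i k ∈
      Submodule.span K (isotropicBasis i '' (![0, g, -g] ⁻¹' {(![0, g, -g] : Fin 3 → G) k})) :=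
    Submodule.subset_span ⟨k, rfl, rfl⟩
  have hone : 1 ∈ Submodule.span K (isotropicBasis i '' (![0, g, -g] ⁻¹' {0})) := hmem 0
  rw [jmulBilin_apply]
  match k, l with
  | 0, l => simpa [isotropicBasis_zero, one_jmul h2] using hmem l
  | 1, 0 => simpa [isotropicBasis_zero, jmul_one h2] using hmem 1
  | 2, 0 => simpa [isotropicBasis_zero, jmul_one h2] using hmem 2
  | 1, 1 => simp [jmul_isotropicBasis_one_one h2 hi]
  | 2, 2 => simp [jmul_isotropicBasis_two_two h2 hi]
  | 1, 2 => simpa [jmul_isotropicBasis_one_two h2 hi] using Submodule.smul_mem _ 2 hone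
  | 2, 1 =>
    simpa [jmul_comm (isotropicBasis i 2), jmul_isotropicBasis_one_two h2 hi] using
      Submodule.smul_mem _ 2 hone

theorem exists_isGrading_symSub {G : Type*} [AddGroup G] [Nontrivial G] (h2 : (2 : K) ≠ 0)
    (hsq : IsSquare (-1 : K)) : ∃ A : G → Submodule K (Matrix (Fin 2) (Fin 2) K),
      IsGrading (jmulBilin K) (symSub K) A ∧ A 0 ≠ symSub K := by
  obtain ⟨i, hi⟩ := hsq
  obtain ⟨g, hg⟩ := exists_ne (0 : G)
  have hA := isGrading_isotropicBasis h2 hi.symm g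
  refine ⟨_, hA, hA.ne_of_mem_of_ne_zero hg (Submodule.subset_span ⟨1, rfl, rfl⟩) fun h => ?_⟩
  simpa [isotropicBasis] using congrFun₂ h 0 0

end IsotropicBasis

theorem stmt7_general {G : Type*} [AddGroup G] [Nontrivial G] (hG : ∀ g : G, g + g = 0 → g = 0)
    {K : Type*} [Field K] (h2 : (2 : K) ≠ 0) :
    (∃ A : G → Submodule K (Matrix (Fin 2) (Fin 2) K),
      IsGrading (jmulBilin K) (symSub K) A ∧ A 0 ≠ symSub K) ↔ IsSquare (-1 : K) := by
  refine ⟨?_, exists_isGrading_symSub h2⟩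
  rintro ⟨A, hA, hne⟩
  obtain ⟨g, hg, x, hx, hx0⟩ := hA.exists_ne_zero_of_ne hne
  exact hA.isSquare_neg_one h2 (mt (hG g) hg) hx hx0

/-- `J₂` admits a nontrivial `ℤ₃`-grading if and only if `-1` is a square in `K`. -/
theorem stmt7 {K : Type*} [Field K] (h2 : (2 : K) ≠ 0) :
    (∃ A : ZMod 3 → Submodule K (Matrix (Fin 2) (Fin 2) K),
      (∀ g, A g ≤ symSub K) ∧
      (⨆ g, A g) = symSub K ∧
      (∀ g, A g ⊓ (⨆ h, ⨆ _ : h ≠ g, A h) = ⊥) ∧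
      (∀ g h, ∀ x ∈ A g, ∀ y ∈ A h, jmul x y ∈ A (g + h)) ∧
      A 0 ≠ symSub K) ↔ IsSquare (-1 : K) := by
  simpa only [IsGrading.iff_inf_eq_bot, jmulBilin_apply, and_assoc] using
    stmt7_general (G := ZMod 3) (by decide) h2
end

section
/- For the nonscalar grading of J₂ the following graded identities hold: (a) (x₁,x₂,x₃) = 0 for all x₂ ∈ J₂ whenever x₁ and x₃ both lie in J₀ or both lie in J₁; (b) ((y₁∘z₁), y₂, y₃) = y₁∘(z₁,y₂,y₃) for all y₁,y₂,y₃ ∈ J₀ and z₁ ∈ J₁. -/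
open Matrix

/-- The associator `(x,y,z) = (x∘y)∘z − x∘(y∘z)`. -/
noncomputable def jassoc {K : Type*} [Field K] (x y z : Matrix (Fin 2) (Fin 2) K) :
    Matrix (Fin 2) (Fin 2) K :=
  jmul (jmul x y) z - jmul x (jmul y z)

/-- The matrix `a = e₁₁ − e₂₂`. -/
def amat (K : Type*) [Field K] : Matrix (Fin 2) (Fin 2) K := !![1, 0; 0, -1]

/-- The matrix `b = e₁₂ + e₂₁`. -/
def bmat (K : Type*) [Field K] : Matrix (Fin 2) (Fin 2) K := !![0, 1; 1, 0]

/-- The even part `J₀ = span{I, a}` of the nonscalar grading. -/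
def J0 (K : Type*) [Field K] : Submodule K (Matrix (Fin 2) (Fin 2) K) :=
  Submodule.span K {1, amat K}

/-- The odd part `J₁ = span{b}` of the nonscalar grading. -/
def J1 (K : Type*) [Field K] : Submodule K (Matrix (Fin 2) (Fin 2) K) :=
  Submodule.span K {bmat K}

/-! In the symmetrization `Aˢʸᵐ` of an associative ring, the associator is an iterated commutator:
`(x, y, z) = ¼ [y, [x, z]]`. Hence it vanishes as soon as `x` and `z` commute in `A`. Moreover
`[d, ·]` is a derivation of the Jordan product, so it commutes with Jordan multiplication by `w`
whenever `d` and `w` commute; applied to both brackets, this gives `(w ∘ x, y, z) = w ∘ (x, y, z)`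
when `w` commutes with `y` and `z`. Both identities follow, because the elements of `J₀`, and those
of `J₁`, commute with each other as matrices. -/

theorem commute_of_mem_span {R A : Type*} [CommSemiring R] [Semiring A] [Algebra R A] {s : Set A}
    (hs : s.Pairwise Commute) {x y : A} (hx : x ∈ Submodule.span R s)
    (hy : y ∈ Submodule.span R s) : Commute x y := by
  have commute_gen : ∀ b ∈ s, Commute b x := fun b hb =>
    Algebra.commute_of_mem_adjoin_of_forall_mem_commute (Algebra.span_le_adjoin R s hx)
      fun a ha => hs.of_refl hb ha
  exact Algebra.commute_of_mem_adjoin_of_forall_mem_commute (Algebra.span_le_adjoin R s hy)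
    fun b hb => (commute_gen b hb).symm

section Symmetrization

open SymAlg

attribute [local instance] LieRing.ofAssociativeRing

variable {A : Type*} [Ring A] [Invertible (2 : A)]

theorem commute_invOf_two (x : A) : Commute (⅟2 : A) x :=
  (Commute.ofNat_left 2 x).invOf_left

theorem unsym_mul_sym_invOf_two_mul (w : Aˢʸᵐ) (c : A) :
    unsym (w * sym (⅟2 * c)) = ⅟2 * unsym (w * sym c) := by
  rw [unsym_mul, unsym_mul, unsym_sym, unsym_sym, (commute_invOf_two _).symm.left_comm, mul_assoc,
    ← mul_add]

theorem associator_eq_sym_lie_lie (x y z : Aˢʸᵐ) :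
    associator x y z = sym (⅟2 * (⅟2 * ⁅unsym y, ⁅unsym x, unsym z⁆⁆)) := by
  have left : unsym (x * y * z) =
      ⅟2 * (⅟2 * (unsym z * (unsym x * unsym y + unsym y * unsym x) +
        (unsym x * unsym y + unsym y * unsym x) * unsym z)) := by
    rw [SymAlg.mul_comm, mul_def x y, unsym_mul_sym_invOf_two_mul, unsym_mul, unsym_sym]
  have right : unsym (x * (y * z)) =
      ⅟2 * (⅟2 * (unsym x * (unsym y * unsym z + unsym z * unsym y) +
        (unsym y * unsym z + unsym z * unsym y) * unsym x)) := by
    rw [mul_def y z, unsym_mul_sym_invOf_two_mul, unsym_mul, unsym_sym]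
  apply unsym_injective
  rw [associator_apply, unsym_sub, left, right, unsym_sym, ← mul_sub, ← mul_sub, Ring.lie_def,
    Ring.lie_def]
  noncomm_ring

theorem lie_unsym_mul (d : A) (x y : Aˢʸᵐ) :
    ⁅d, unsym (x * y)⁆ = unsym (sym ⁅d, unsym x⁆ * y) + unsym (x * sym ⁅d, unsym y⁆) := by
  simp only [unsym_mul, unsym_sym, Ring.lie_def]
  rw [(commute_invOf_two d).symm.left_comm, mul_assoc, ← mul_sub, ← mul_add]
  noncomm_ring

theorem lie_unsym_mul_of_commute {d : A} {w : Aˢʸᵐ} (h : Commute d (unsym w)) (x : Aˢʸᵐ) :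
    ⁅d, unsym (w * x)⁆ = unsym (w * sym ⁅d, unsym x⁆) := by
  rw [lie_unsym_mul, h.lie_eq, sym_zero, zero_mul, unsym_zero, zero_add]

theorem associator_eq_zero_of_commute_unsym {x z : Aˢʸᵐ} (h : Commute (unsym x) (unsym z))
    (y : Aˢʸᵐ) : associator x y z = 0 := by
  rw [associator_eq_sym_lie_lie, h.lie_eq, lie_zero, mul_zero, mul_zero, sym_zero]

theorem associator_mul_left_of_commute_unsym {w y z : Aˢʸᵐ} (hy : Commute (unsym w) (unsym y))
    (hz : Commute (unsym w) (unsym z)) (x : Aˢʸᵐ) :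
    associator (w * x) y z = w * associator x y z := by
  have inner : ⁅unsym (w * x), unsym z⁆ = unsym (w * sym ⁅unsym x, unsym z⁆) := by
    rw [← lie_skew, lie_unsym_mul_of_commute hz.symm, ← lie_skew (unsym x), sym_neg, mul_neg,
      unsym_neg]
  apply unsym_injective
  calc unsym (associator (w * x) y z)
      = ⅟2 * (⅟2 * ⁅unsym y, unsym (w * sym ⁅unsym x, unsym z⁆)⁆) := by
        rw [associator_eq_sym_lie_lie, inner, unsym_sym]
    _ = ⅟2 * (⅟2 * unsym (w * sym ⁅unsym y, ⁅unsym x, unsym z⁆⁆)) := by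
        rw [lie_unsym_mul_of_commute hy.symm, unsym_sym]
    _ = unsym (w * associator x y z) := by
        rw [associator_eq_sym_lie_lie, unsym_mul_sym_invOf_two_mul, unsym_mul_sym_invOf_two_mul]

end Symmetrization

section Matrices

open SymAlg

variable {K : Type*} [Field K]

theorem commute_of_mem_J0 {x y : Matrix (Fin 2) (Fin 2) K} (hx : x ∈ J0 K) (hy : y ∈ J0 K) :
    Commute x y :=
  commute_of_mem_span (Set.pairwise_pair_of_symm.2 fun _ => Commute.one_left _) hx hy

theorem commute_of_mem_J1 {x y : Matrix (Fin 2) (Fin 2) K} (hx : x ∈ J1 K) (hy : y ∈ J1 K) :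
    Commute x y :=
  commute_of_mem_span (Set.pairwise_singleton _ _) hx hy

variable [Invertible (2 : Matrix (Fin 2) (Fin 2) K)]

theorem jmul_eq_unsym_mul (h2 : (2 : K) ≠ 0) (x y : Matrix (Fin 2) (Fin 2) K) :
    jmul x y = unsym (sym x * sym y) := by
  rw [jmul, inv_smul_eq_iff₀ h2, two_smul, ← two_mul, unsym_mul, mul_invOf_cancel_left, unsym_sym,
    unsym_sym]

theorem jassoc_eq_unsym_associator (h2 : (2 : K) ≠ 0) (x y z : Matrix (Fin 2) (Fin 2) K) :
    jassoc x y z = unsym (associator (sym x) (sym y) (sym z)) := by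
  simp only [jassoc, jmul_eq_unsym_mul h2, associator_apply, unsym_sub]
  rfl

end Matrices

theorem stmt9_general {K : Type*} [Field K] (h2 : (2 : K) ≠ 0) :
    (∀ x₁ x₂ x₃ : Matrix (Fin 2) (Fin 2) K,
      ((x₁ ∈ J0 K ∧ x₃ ∈ J0 K) ∨ (x₁ ∈ J1 K ∧ x₃ ∈ J1 K)) →
      jassoc x₁ x₂ x₃ = 0) ∧
    (∀ y₁ ∈ J0 K, ∀ y₂ ∈ J0 K, ∀ y₃ ∈ J0 K, ∀ z : Matrix (Fin 2) (Fin 2) K,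
      jassoc (jmul y₁ z) y₂ y₃ = jmul y₁ (jassoc z y₂ y₃)) := by
  have isUnit_two : IsUnit (2 : Matrix (Fin 2) (Fin 2) K) := by
    simpa only [map_ofNat] using
      (IsUnit.mk0 (2 : K) h2).map (algebraMap K (Matrix (Fin 2) (Fin 2) K))
  obtain ⟨_⟩ := isUnit_two.nonempty_invertible
  refine ⟨fun x₁ x₂ x₃ h => ?_, fun y₁ hy₁ y₂ hy₂ y₃ hy₃ z => ?_⟩
  · have comm : Commute x₁ x₃ :=
      h.elim (fun h => commute_of_mem_J0 h.1 h.2) fun h => commute_of_mem_J1 h.1 h.2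
    rw [jassoc_eq_unsym_associator h2, SymAlg.unsym_eq_zero_iff]
    exact associator_eq_zero_of_commute_unsym comm (SymAlg.sym x₂)
  · simp only [jassoc_eq_unsym_associator h2, jmul_eq_unsym_mul h2]
    exact congrArg SymAlg.unsym (associator_mul_left_of_commute_unsym
      (commute_of_mem_J0 hy₁ hy₂) (commute_of_mem_J0 hy₁ hy₃) (SymAlg.sym z))

/-- Graded identities: (a) `(x₁,x₂,x₃) = 0` when `x₁, x₃` have the same parity;
(b) `(y₁∘z₁, y₂, y₃) = y₁∘(z₁,y₂,y₃)`. -/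
theorem stmt9 {K : Type*} [Field K] (h2 : (2 : K) ≠ 0) :
    (∀ x₁ x₂ x₃ : Matrix (Fin 2) (Fin 2) K, x₂ᵀ = x₂ →
      ((x₁ ∈ J0 K ∧ x₃ ∈ J0 K) ∨ (x₁ ∈ J1 K ∧ x₃ ∈ J1 K)) →
      jassoc x₁ x₂ x₃ = 0) ∧
    (∀ y₁ ∈ J0 K, ∀ y₂ ∈ J0 K, ∀ y₃ ∈ J0 K, ∀ z₁ ∈ J1 K,
      jassoc (jmul y₁ z₁) y₂ y₃ = jmul y₁ (jassoc z₁ y₂ y₃)) :=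
  ⟨fun x₁ x₂ x₃ _ => (stmt9_general h2).1 x₁ x₂ x₃,
    fun y₁ hy₁ y₂ hy₂ y₃ hy₃ z₁ _ => (stmt9_general h2).2 y₁ hy₁ y₂ hy₂ y₃ hy₃ z₁⟩
end

section
/- For the nonscalar grading of J₂: for every k ≥ 1, all z₁,z₂ ∈ J₁, all y₁,…,y_{2k+1} ∈ J₀, every permutation σ of {1,…,2k+1}, and every permutation τ of {1,2}, the left-normed associator satisfies (z₁, y₁, …, y_{2k}, z₂, y_{2k+1}) = (z_{τ(1)}, y_{σ(1)}, …, y_{σ(2k)}, z_{τ(2)}, y_{σ(2k+1)}). -/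
open Matrix

/-- The left-normed associator `(w, u₁, …, u_{2j}) = ((w, u₁, …, u_{2j−2}), u_{2j−1}, u_{2j})`,
consuming the list of arguments two at a time. -/
noncomputable def leftNormed {K : Type*} [Field K] (w : Matrix (Fin 2) (Fin 2) K) :
    List (Matrix (Fin 2) (Fin 2) K) → Matrix (Fin 2) (Fin 2) K
  | u₁ :: u₂ :: rest => leftNormed (jassoc w u₁ u₂) rest
  | _ => w

/-!
The Jordan associator is a double commutator, `(x, y, z) = ¼ [y, [x, z]]`, so scalar matrices in
an even slot contribute nothing. Together with `[a, [a, b]] = 4b` and `[b, [b, a]] = 4a` this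
reduces the associator on homogeneous arguments to coordinates: two even arguments multiply an odd
matrix by minus the product of their `a`-coordinates, and the outermost associator turns two odd
matrices and an even one into a multiple of `a`. Hence the left-normed associator equals
`(-1)ᵏ ∏ β(zᵢ) ∏ α(yⱼ) • a`, with `α`, `β` the coordinates along `a` and `b`, and both products are
invariant under permutations.
-/

theorem four_ne_zero_of_two_ne_zero {R : Type*} [Semiring R] [NoZeroDivisors R]
    (h2 : (2 : R) ≠ 0) : (4 : R) ≠ 0 := by
  rw [show (4 : R) = 2 * 2 by norm_num]
  exact mul_ne_zero h2 h2

section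


variable {K : Type*} [Field K]

/-- The coordinate along `amat K` of an element of `J0 K = span {1, amat K}`, read off the
diagonal. It is defined on all matrices so that it can be used without a membership proof, but it
has this meaning only on `J0 K`, and only when `2 ≠ 0`. -/
def aCoord (x : Matrix (Fin 2) (Fin 2) K) : K := (x 0 0 - x 1 1) / 2

/-- The coordinate along `bmat K` of an element of `J1 K = span {bmat K}`. It is defined on all
matrices as the upper right entry, but has this meaning only on `J1 K`. -/
def bCoord (x : Matrix (Fin 2) (Fin 2) K) : K := x 0 1

theorem exists_eq_smul_one_add_aCoord_smul (h2 : (2 : K) ≠ 0) {x : Matrix (Fin 2) (Fin 2) K}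
    (hx : x ∈ J0 K) : ∃ p : K, x = p • 1 + aCoord x • amat K := by
  obtain ⟨p, q, rfl⟩ := Submodule.mem_span_pair.1 hx
  have hq : aCoord (p • 1 + q • amat K) = q := by
    have hdiag : p + q - (p - q) = q * 2 := by ring
    simp [aCoord, amat, ← sub_eq_add_neg, hdiag, h2]
  exact ⟨p, by rw [hq]⟩

theorem eq_bCoord_smul_bmat {z : Matrix (Fin 2) (Fin 2) K} (hz : z ∈ J1 K) :
    z = bCoord z • bmat K := by
  obtain ⟨c, rfl⟩ := Submodule.mem_span_singleton.1 hz
  simp [bCoord, bmat]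

attribute [local instance] LieRing.ofAssociativeRing

theorem jassoc_eq_lie_lie (x y z : Matrix (Fin 2) (Fin 2) K) :
    jassoc x y z = (4 : K)⁻¹ • ⁅y, ⁅x, z⁆⁆ := by
  have h4 : (4 : K)⁻¹ = 2⁻¹ * 2⁻¹ := by rw [← mul_inv]; norm_num
  simp only [jassoc, jmul, Ring.lie_def, h4, mul_smul, smul_mul_assoc, mul_smul_comm,
    ← smul_add, ← smul_sub]
  congr 2
  noncomm_ring

theorem lie_amat_lie_amat_bmat : ⁅amat K, ⁅amat K, bmat K⁆⁆ = (4 : K) • bmat K := by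
  ext i j
  fin_cases i <;> fin_cases j <;> simp [Ring.lie_def, amat, bmat] <;> norm_num

theorem lie_bmat_lie_bmat_amat : ⁅bmat K, ⁅bmat K, amat K⁆⁆ = (4 : K) • amat K := by
  ext i j
  fin_cases i <;> fin_cases j <;> simp [Ring.lie_def, amat, bmat] <;> norm_num

theorem lie_eq_aCoord_smul_lie_amat (h2 : (2 : K) ≠ 0) {x : Matrix (Fin 2) (Fin 2) K}
    (hx : x ∈ J0 K) (w : Matrix (Fin 2) (Fin 2) K) : ⁅x, w⁆ = aCoord x • ⁅amat K, w⁆ := by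
  obtain ⟨p, hp⟩ := exists_eq_smul_one_add_aCoord_smul h2 hx
  have hone : ⁅(1 : Matrix (Fin 2) (Fin 2) K), w⁆ = 0 := (Commute.one_left w).lie_eq
  calc ⁅x, w⁆ = ⁅p • 1 + aCoord x • amat K, w⁆ := by rw [← hp]
    _ = aCoord x • ⁅amat K, w⁆ := by rw [add_lie, smul_lie, smul_lie, hone, smul_zero, zero_add]

theorem jassoc_of_mem_J1_J0_J0 (h2 : (2 : K) ≠ 0) {z x y : Matrix (Fin 2) (Fin 2) K}
    (hz : z ∈ J1 K) (hx : x ∈ J0 K) (hy : y ∈ J0 K) :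
    jassoc z x y = -(aCoord x * aCoord y) • z := by
  have haaz : ⁅amat K, ⁅amat K, z⁆⁆ = (4 : K) • z := by
    rw [eq_bCoord_smul_bmat hz, lie_smul, lie_smul, lie_amat_lie_amat_bmat, smul_comm]
  calc jassoc z x y = -((4 : K)⁻¹ • ⁅x, ⁅y, z⁆⁆) := by
        rw [jassoc_eq_lie_lie, ← lie_skew z y, lie_neg, smul_neg]
    _ = -((4 : K)⁻¹ • (aCoord x * aCoord y) • ⁅amat K, ⁅amat K, z⁆⁆) := by
        rw [lie_eq_aCoord_smul_lie_amat h2 hy, lie_eq_aCoord_smul_lie_amat h2 hx, lie_smul,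
          smul_smul (aCoord x)]
    _ = -(aCoord x * aCoord y) • z := by
        rw [haaz, smul_comm, inv_smul_smul₀ (four_ne_zero_of_two_ne_zero h2), neg_smul]

theorem jassoc_of_mem_J1_J1_J0 (h2 : (2 : K) ≠ 0) {z w y : Matrix (Fin 2) (Fin 2) K}
    (hz : z ∈ J1 K) (hw : w ∈ J1 K) (hy : y ∈ J0 K) :
    jassoc z w y = (bCoord z * bCoord w * aCoord y) • amat K := by
  have hzy : ⁅z, y⁆ = (bCoord z * aCoord y) • ⁅bmat K, amat K⁆ := by
    rw [← lie_skew, lie_eq_aCoord_smul_lie_amat h2 hy, ← smul_neg, lie_skew]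
    nth_rw 1 [eq_bCoord_smul_bmat hz]
    rw [smul_lie, smul_smul, mul_comm]
  calc jassoc z w y = (4 : K)⁻¹ • ⁅w, ⁅z, y⁆⁆ := jassoc_eq_lie_lie z w y
    _ = (4 : K)⁻¹ • (bCoord z * bCoord w * aCoord y) • ⁅bmat K, ⁅bmat K, amat K⁆⁆ := by
        nth_rw 1 [hzy, eq_bCoord_smul_bmat hw]
        rw [smul_lie, lie_smul, smul_smul (bCoord w)]
        congr 2
        ring
    _ = (bCoord z * bCoord w * aCoord y) • amat K := by
        rw [lie_bmat_lie_bmat_amat, smul_comm, inv_smul_smul₀ (four_ne_zero_of_two_ne_zero h2)]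

theorem leftNormed_of_mem_J1 (h2 : (2 : K) ≠ 0) {k : ℕ} {z : Matrix (Fin 2) (Fin 2) K}
    (hz : z ∈ J1 K) {l : List (Matrix (Fin 2) (Fin 2) K)} (hlen : l.length = 2 * k)
    (hl : ∀ y ∈ l, y ∈ J0 K) :
    leftNormed z l = ((-1) ^ k * (l.map aCoord).prod) • z := by
  induction k generalizing z l with
  | zero =>
    obtain rfl : l = [] := List.length_eq_zero_iff.1 hlen
    simp [leftNormed]
  | succ k ih =>
    match l, hlen with
    | x :: y :: l, hlen =>
      simp only [List.forall_mem_cons] at hl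
      obtain ⟨hx, hy, hl⟩ := hl
      have hlen : l.length = 2 * k := by simp only [List.length_cons] at hlen; lia
      rw [leftNormed, jassoc_of_mem_J1_J0_J0 h2 hz hx hy,
        ih (Submodule.smul_mem _ _ hz) hlen hl, smul_smul, List.map_cons, List.map_cons,
        List.prod_cons, List.prod_cons]
      congr 1
      ring

theorem jassoc_leftNormed_eq_prod_smul_amat (h2 : (2 : K) ≠ 0) {k : ℕ}
    {z : Fin 2 → Matrix (Fin 2) (Fin 2) K} (hz : ∀ i, z i ∈ J1 K)
    {y : Fin (2 * k + 1) → Matrix (Fin 2) (Fin 2) K} (hy : ∀ i, y i ∈ J0 K) :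
    jassoc (leftNormed (z 0) (List.ofFn fun i : Fin (2 * k) => y i.castSucc))
        (z 1) (y (Fin.last (2 * k))) =
      ((-1) ^ k * (∏ i, bCoord (z i)) * ∏ i, aCoord (y i)) • amat K := by
  have hleft : leftNormed (z 0) (List.ofFn fun i : Fin (2 * k) => y i.castSucc) =
      ((-1) ^ k * ∏ i : Fin (2 * k), aCoord (y i.castSucc)) • z 0 := by
    rw [leftNormed_of_mem_J1 h2 (hz 0) List.length_ofFn
      (List.forall_mem_ofFn_iff.2 fun i => hy i.castSucc), List.map_ofFn, List.prod_ofFn]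
    rfl
  have hbCoord (c : K) : bCoord (c • z 0) = c * bCoord (z 0) := rfl
  rw [hleft, jassoc_of_mem_J1_J1_J0 h2 (Submodule.smul_mem _ _ (hz 0)) (hz 1) (hy _), hbCoord,
    Fin.prod_univ_two, Fin.prod_univ_castSucc]
  congr 1
  ring

end

/-- For the nonscalar grading:
`(z₁, y₁, …, y_{2k}, z₂, y_{2k+1}) = (z_{τ(1)}, y_{σ(1)}, …, y_{σ(2k)}, z_{τ(2)}, y_{σ(2k+1)})`
for all permutations `σ` of the even variables and `τ` of the odd variables. -/
theorem stmt11 {K : Type*} [Field K] (h2 : (2 : K) ≠ 0) (k : ℕ) (hk : 1 ≤ k)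
    (z : Fin 2 → Matrix (Fin 2) (Fin 2) K) (hz : ∀ i, z i ∈ J1 K)
    (y : Fin (2 * k + 1) → Matrix (Fin 2) (Fin 2) K) (hy : ∀ i, y i ∈ J0 K)
    (σ : Equiv.Perm (Fin (2 * k + 1))) (τ : Equiv.Perm (Fin 2)) :
    jassoc (leftNormed (z 0) (List.ofFn fun i : Fin (2 * k) => y i.castSucc))
        (z 1) (y (Fin.last (2 * k))) =
      jassoc (leftNormed (z (τ 0)) (List.ofFn fun i : Fin (2 * k) => y (σ i.castSucc)))
        (z (τ 1)) (y (σ (Fin.last (2 * k)))) := by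
  rw [jassoc_leftNormed_eq_prod_smul_amat h2 hz hy,
    jassoc_leftNormed_eq_prod_smul_amat h2 (fun i => hz (τ i)) (fun i => hy (σ i)),
    Equiv.prod_comp τ fun i => bCoord (z i), Equiv.prod_comp σ fun i => aCoord (y i)]
end

section
/- Let V be an n-dimensional K-vector space with a symmetric bilinear form ⟨·,·⟩, and let x₁, …, x_{2n+1} ∈ V. Then the alternating sum over all permutations σ of {1,…,n+1} vanishes: Σ_σ sgn(σ) · (∏_{j=2}^{n+1} ⟨x_{n+j}, x_{σ(j)}⟩) · x_{σ(1)} = 0. (This says that the polynomial f_n = Σ_σ (−1)^σ x_{σ(1)}(x_{n+2}x_{σ(2)})⋯(x_{2n+1}x_{σ(n+1)}) is a weak identity for the pair (Bₙ, Vₙ).) -/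
/-! The sum is the alternatization of the multilinear map
`(y₁, …, y_{n+1}) ↦ (∏_{j ≥ 2} ⟨x_{n+j}, yⱼ⟩) • y₁`. An alternating map kills linearly dependent
families, and `n + 1` vectors of an `n`-dimensional space are linearly dependent. -/

open Equiv Module

section SMulProd

variable {R M : Type*} {n : ℕ}

/-- The multilinear map `y ↦ (∏ j, f j (y j.succ)) • y 0`, whose alternatization is the polynomial
`f_n` when the functionals `f j` are pairings with fixed vectors. -/
def smulProdDual [CommSemiring R] [AddCommMonoid M] [Module R M] (f : Fin n → Dual R M) :
    MultilinearMap R (fun _ : Fin (n + 1) ↦ M) M :=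
  LinearMap.uncurryLeft (M := fun _ ↦ M)
    (MultilinearMap.compLinearMapₗ f ∘ₗ MultilinearMap.piRingEquiv.toLinearMap)

theorem smulProdDual_apply [CommSemiring R] [AddCommMonoid M] [Module R M]
    (f : Fin n → Dual R M) (y : Fin (n + 1) → M) :
    smulProdDual f y = (∏ j, f j (y j.succ)) • y 0 :=
  rfl

theorem alternatization_smulProdDual_apply [CommRing R] [AddCommGroup M] [Module R M]
    (f : Fin n → Dual R M) (y : Fin (n + 1) → M) :
    (smulProdDual f).alternatization y =
      ∑ σ : Perm (Fin (n + 1)), (Perm.sign σ : ℤ) • ((∏ j, f j (y (σ j.succ))) • y (σ 0)) := by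
  simp only [MultilinearMap.alternatization_apply, MultilinearMap.domDomCongr_apply,
    smulProdDual_apply, Units.smul_def]

theorem stmt16_general [CommRing R] [IsDomain R] [AddCommGroup M] [Module R M] [IsTorsionFree R M]
    (f : Fin n → Dual R M) (y : Fin (n + 1) → M) (hy : ¬LinearIndependent R y) :
    ∑ σ : Perm (Fin (n + 1)),
      (Perm.sign σ : ℤ) • ((∏ j, f j (y (σ j.succ))) • y (σ 0)) = 0 := by
  rw [← alternatization_smulProdDual_apply]
  exact (smulProdDual f).alternatization.map_linearDependent y hy

end SMulProd

/-- For an `n`-dimensional space `V` with a symmetric bilinear form and any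
`x₁, …, x_{2n+1} ∈ V`, the alternating sum
`Σ_σ sgn(σ) (∏_{j=2}^{n+1} ⟨x_{n+j}, x_{σ(j)}⟩) x_{σ(1)}` vanishes; i.e. the polynomial
`f_n` is a weak identity for the pair `(Bₙ, Vₙ)`. -/
theorem stmt16 {K V : Type*} [Field K] [AddCommGroup V] [Module K V]
    [FiniteDimensional K V] (n : ℕ) (hdim : Module.finrank K V = n)
    (b : V →ₗ[K] V →ₗ[K] K) (hsymm : ∀ u v : V, b u v = b v u)
    (x : Fin (2 * n + 1) → V) :
    ∑ σ : Equiv.Perm (Fin (n + 1)),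
      (Equiv.Perm.sign σ : ℤ) •
        ((∏ j : Fin n,
            b (x ⟨n + 1 + (j : ℕ), by omega⟩)
              (x (Fin.castLE (by omega) (σ j.succ)))) •
          x (Fin.castLE (by omega) (σ 0))) = 0 :=
  stmt16_general (fun j : Fin n ↦ b (x ⟨n + 1 + j, by omega⟩)) (fun i ↦ x (i.castLE (by omega)))
    fun hy ↦ by simpa [hdim] using hy.fintype_card_le_finrank
end

section
/- For all symmetric traceless 2×2 matrices z₁, z₂, z₃, z₄, z₅ over K: Σ_{σ ∈ S₃} sgn(σ) · ((z_{σ(1)} ∘ (z₄ ∘ z_{σ(2)})) ∘ (z₅ ∘ z_{σ(3)})) = 0, where σ ranges over the permutations of {1,2,3}. (This is the graded identity Σ (−1)^σ z_{σ(1)}(z₄z_{σ(2)})(z₅z_{σ(3)}) for the scalar ℤ₂-grading of J₂, whose even part is K·I and whose odd part is the space of traceless symmetric matrices.) -/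
open Matrix

/-!
For any bilinear product and fixed `z₄`, `z₅`, the sum is the alternatization of a map that is
trilinear in `z₁, z₂, z₃`. An alternating map vanishes on linearly dependent vectors, and any three
symmetric traceless `2×2` matrices are linearly dependent, each being of the form
`!![a, b; b, -a]`.
-/

section Alternatization

variable {R M N : Type*} [CommRing R] [AddCommGroup M] [Module R M] [AddCommGroup N] [Module R N]

/-- A curried trilinear map, viewed as a multilinear map on `Fin 3 → M` so that Mathlib's
alternatization applies to it. -/
def trilinearToMultilinearMap (f : M →ₗ[R] M →ₗ[R] M →ₗ[R] N) :
    MultilinearMap R (fun _ : Fin 3 => M) N :=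
  MultilinearMap.mk' (fun v => f (v 0) (v 1) (v 2))
    (fun v i x y => by fin_cases i <;> simp)
    (fun v i c x => by fin_cases i <;> simp)

theorem sum_sign_smul_trilinear_eq_zero [IsDomain R] [Module.IsTorsionFree R N]
    (f : M →ₗ[R] M →ₗ[R] M →ₗ[R] N) {v : Fin 3 → M} (hv : ¬LinearIndependent R v) :
    ∑ σ : Equiv.Perm (Fin 3), (Equiv.Perm.sign σ : ℤ) • f (v (σ 0)) (v (σ 1)) (v (σ 2)) = 0 := by
  have alternatization_eq_zero :=
    (MultilinearMap.alternatization (trilinearToMultilinearMap f)).map_linearDependent v hv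
  rwa [MultilinearMap.alternatization_apply] at alternatization_eq_zero

end Alternatization

section TracelessSymmetric

/-- The space of symmetric matrices of trace zero; for `n = Fin 2` it is the odd part of the
scalar grading of `J₂`. -/
def tracelessSymmetric (n R : Type*) [Fintype n] [Semiring R] : Submodule R (Matrix n n R) :=
  LinearMap.eqLocus (Matrix.transposeLinearEquiv n n R R).toLinearMap LinearMap.id ⊓
    LinearMap.ker (Matrix.traceLinearMap n R R)

theorem mem_tracelessSymmetric {n R : Type*} [Fintype n] [Semiring R] {x : Matrix n n R} :
    x ∈ tracelessSymmetric n R ↔ xᵀ = x ∧ x.trace = 0 :=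
  Iff.rfl

theorem eq_of_mem_tracelessSymmetric_fin_two {R : Type*} [Ring R]
    {x : Matrix (Fin 2) (Fin 2) R} (hx : x ∈ tracelessSymmetric (Fin 2) R) :
    x = !![x 0 0, x 0 1; x 0 1, -x 0 0] := by
  obtain ⟨hsymm, htrace⟩ := mem_tracelessSymmetric.mp hx
  have h10 : x 1 0 = x 0 1 := Matrix.IsSymm.apply hsymm 0 1
  have h11 : x 1 1 = -x 0 0 := eq_neg_of_add_eq_zero_right (x.trace_fin_two ▸ htrace)
  exact x.eta_fin_two.trans (by rw [h10, h11])

variable {R : Type*} [CommRing R] [Nontrivial R]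

theorem rank_tracelessSymmetric_fin_two_le :
    Module.rank R (tracelessSymmetric (Fin 2) R) ≤ 2 := by
  let firstRow : tracelessSymmetric (Fin 2) R →ₗ[R] Fin 2 → R :=
    LinearMap.proj 0 ∘ₗ (tracelessSymmetric (Fin 2) R).subtype
  have firstRow_injective : Function.Injective firstRow := by
    intro x y hxy
    have h00 : x.1 0 0 = y.1 0 0 := congrFun hxy 0
    have h01 : x.1 0 1 = y.1 0 1 := congrFun hxy 1
    apply Subtype.ext
    rw [eq_of_mem_tracelessSymmetric_fin_two x.2, eq_of_mem_tracelessSymmetric_fin_two y.2,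
      h00, h01]
  simpa only [rank_fin_fun, Nat.cast_ofNat] using
    LinearMap.rank_le_of_injective firstRow firstRow_injective

theorem not_linearIndependent_of_mem_tracelessSymmetric
    {z : Fin 3 → Matrix (Fin 2) (Fin 2) R} (hz : ∀ i, z i ∈ tracelessSymmetric (Fin 2) R) :
    ¬LinearIndependent R z := by
  intro independent
  have independent_subtype :
      LinearIndependent R fun i => (⟨z i, hz i⟩ : tracelessSymmetric (Fin 2) R) :=
    .of_comp (tracelessSymmetric (Fin 2) R).subtype independent
  have three_le_two : (3 : Cardinal) ≤ 2 := by
    simpa using independent_subtype.cardinal_lift_le_rank.trans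
      (Cardinal.lift_le.mpr rank_tracelessSymmetric_fin_two_le)
  exact absurd three_le_two (by norm_num)

end TracelessSymmetric

/-- The Jordan product `jmul` as a bilinear map, the form of product in `stmt17_general`. -/
noncomputable def jmulBilinear (K : Type*) [Field K] :
    Matrix (Fin 2) (Fin 2) K →ₗ[K] Matrix (Fin 2) (Fin 2) K →ₗ[K] Matrix (Fin 2) (Fin 2) K :=
  (2 : K)⁻¹ • (LinearMap.mul K _ + (LinearMap.mul K _).flip)

theorem jmulBilinear_apply {K : Type*} [Field K] (x y : Matrix (Fin 2) (Fin 2) K) :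
    jmulBilinear K x y = jmul x y :=
  rfl

theorem stmt17_general {R M : Type*} [CommRing R] [IsDomain R] [AddCommGroup M] [Module R M]
    [Module.IsTorsionFree R M] (μ : M →ₗ[R] M →ₗ[R] M) {z : Fin 3 → M} (hz : ¬LinearIndependent R z)
    (z₄ z₅ : M) :
    ∑ σ : Equiv.Perm (Fin 3),
      (Equiv.Perm.sign σ : ℤ) • μ (μ (z (σ 0)) (μ z₄ (z (σ 1)))) (μ z₅ (z (σ 2))) = 0 :=
  sum_sign_smul_trilinear_eq_zero ((μ.compl₂ (μ z₄)).compr₂ (μ.compl₂ (μ z₅))) hz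

/-- The graded identity `Σ_{σ∈S₃} (−1)^σ z_{σ(1)}(z₄ z_{σ(2)})(z₅ z_{σ(3)}) = 0` for the
scalar `ℤ₂`-grading of `J₂`: it holds for all symmetric traceless matrices `z₁,…,z₅`. -/
theorem stmt17 {K : Type*} [Field K] (h2 : (2 : K) ≠ 0)
    (z₁ z₂ z₃ z₄ z₅ : Matrix (Fin 2) (Fin 2) K)
    (h₁ : z₁ᵀ = z₁) (h₂ : z₂ᵀ = z₂) (h₃ : z₃ᵀ = z₃) (h₄ : z₄ᵀ = z₄) (h₅ : z₅ᵀ = z₅)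
    (t₁ : Matrix.trace z₁ = 0) (t₂ : Matrix.trace z₂ = 0) (t₃ : Matrix.trace z₃ = 0)
    (t₄ : Matrix.trace z₄ = 0) (t₅ : Matrix.trace z₅ = 0) :
    ∑ σ : Equiv.Perm (Fin 3),
      (Equiv.Perm.sign σ : ℤ) •
        jmul (jmul (![z₁, z₂, z₃] (σ 0)) (jmul z₄ (![z₁, z₂, z₃] (σ 1))))
          (jmul z₅ (![z₁, z₂, z₃] (σ 2))) = 0 := by
  have dependent : ¬LinearIndependent K ![z₁, z₂, z₃] :=
    not_linearIndependent_of_mem_tracelessSymmetric <| by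
      simp [Fin.forall_fin_succ, mem_tracelessSymmetric, h₁, h₂, h₃, t₁, t₂, t₃]
  simpa only [jmulBilinear_apply] using stmt17_general (jmulBilinear K) dependent z₄ z₅
end
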